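/- arXiv:math/0611893 — 4 statements merged into one kernel-verified Lean document; each statement's English description precedes it below -/
import Mathlib

section
/- Fix an even integer d ≥ 4. Then: (i) for every ε > 0 there exists N such that for all even n ≥ N, fmax(d,n;1) ≥ ((d−2)/(d−1) − ε)·C(n,2); and (ii) for all even n, fmax(d,n;1) ≤ (1 − 2^{−d})·n²/2. In particular, fmax(d,n;1)/C(n,2) lies between 1 − 1/(d−1) + o(1) and 1 − 2^{−d} + o(1) as n → ∞. -/
open Real

/-- A centrally symmetric polytope in `ℝ^d`: the convex hull of a finite set,
satisfying `P = -P`. -/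
def IsCSPolytope {d : ℕ} (P : Set (EuclideanSpace ℝ (Fin d))) : Prop :=
  (∃ V : Finset (EuclideanSpace ℝ (Fin d)), P = convexHull ℝ (V : Set (EuclideanSpace ℝ (Fin d)))) ∧
  P = -P

/-- The number of `j`-dimensional faces of `P`, a face being the intersection of `P`
with a supporting hyperplane, i.e. a nonempty exposed face. -/
noncomputable def faceCount {d : ℕ} (P : Set (EuclideanSpace ℝ (Fin d))) (j : ℕ) : ℕ :=
  Set.ncard {F : Set (EuclideanSpace ℝ (Fin d)) |
    IsExposed ℝ P F ∧ F.Nonempty ∧ Module.finrank ℝ (vectorSpan ℝ F) = j}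

/-- `fmax d n j`: the maximum number of `j`-faces of a `d`-dimensional centrally
symmetric polytope in `ℝ^d` with exactly `n` vertices. -/
noncomputable def fmax (d n j : ℕ) : ℕ :=
  sSup {m : ℕ | ∃ P : Set (EuclideanSpace ℝ (Fin d)),
    IsCSPolytope P ∧ affineSpan ℝ P = ⊤ ∧
    (Set.extremePoints ℝ P).ncard = n ∧ faceCount P j = m}

/-!
For the upper bound, let `P` be centrally symmetric. If `[u, v]` is an edge, then `u + int P` and
`-v + int P` are disjoint, for otherwise the midpoint of `u` and `v` would be interior to `P`. All
translates of `int P` by vertices lie in `2 • int P`, so by volume at most `2 ^ d` of them are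
pairwise disjoint, and Turán's theorem bounds the number of edges.

For the lower bound, write `d = m + 1` with `m` odd and take the vertices on the homogeneous
trigonometric moment curve of degree `m`, at `n` equally spaced parameters. Linear functionals
restrict to this curve as trigonometric forms of degree `m`, and `± T m (c * cos (θ - μ))` is such
a form. Perturbed so that its smallest positive maximum point on `[-1, 1]` becomes the unique one,
the Chebyshev polynomial attains its maximum over the parameters exactly at `μ ± τ`, where `c` is
chosen to make `c * cos τ` that maximum point. This exposes a chord whenever `c ≤ 1`, that is,
whenever its angular length is at most `π * (m - 1) / m`.
-/

open scoped Pointwise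

section EdgeGraph

variable {E : Type*} [NormedAddCommGroup E] [NormedSpace ℝ E] {P F : Set E} {u v : E}

theorem subset_segment_of_collinear (hu : u ∈ F.extremePoints ℝ) (hv : v ∈ F.extremePoints ℝ)
    (huv : u ≠ v) (hF : Collinear ℝ F) : F ⊆ segment ℝ u v := by
  intro w hw
  have huvw : Collinear ℝ {u, v, w} := hF.subset (by simp [Set.insert_subset_iff, hu.1, hv.1, hw])
  rw [mem_extremePoints_iff_forall_segment] at hu hv
  simp only [mem_segment_iff_wbtw] at hu hv ⊢
  rcases huvw.wbtw_or_wbtw_or_wbtw with h | h | h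
  · obtain rfl := (hv.2 u hu.1 w hw h).resolve_left huv
    exact wbtw_self_right ℝ u w
  · exact h.symm
  · obtain rfl := (hu.2 w hw v hv.1 h).resolve_right huv.symm
    exact wbtw_self_left ℝ w v

theorem nontrivial_extremePoints_of_nontrivial (hF : IsCompact F) (hconv : Convex ℝ F)
    (hnt : F.Nontrivial) : (F.extremePoints ℝ).Nontrivial := by
  by_contra hns
  rw [Set.not_nontrivial_iff] at hns
  have hsub : (closure (convexHull ℝ (F.extremePoints ℝ))).Subsingleton := by
    rcases hns.eq_empty_or_singleton with h | ⟨x, h⟩ <;> simp [h]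
  rw [closure_convexHull_extremePoints hF hconv] at hsub
  exact hnt.not_subsingleton hsub

theorem finrank_vectorSpan_segment (huv : u ≠ v) :
    Module.finrank ℝ (vectorSpan ℝ (segment ℝ u v)) = 1 := by
  rw [← convexHull_pair, ← direction_affineSpan, affineSpan_convexHull, direction_affineSpan,
    vectorSpan_pair_rev, finrank_span_singleton (vsub_ne_zero.2 huv.symm)]

theorem exists_eq_segment_of_finrank_vectorSpan_eq_one (hF : IsCompact F) (hconv : Convex ℝ F)
    (hrank : Module.finrank ℝ (vectorSpan ℝ F) = 1) :
    ∃ u ∈ F.extremePoints ℝ, ∃ v ∈ F.extremePoints ℝ, u ≠ v ∧ segment ℝ u v = F := by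
  have hnt : F.Nontrivial := by
    rw [← Set.not_subsingleton_iff]
    intro hsub
    rw [vectorSpan_of_subsingleton ℝ hsub, finrank_bot] at hrank
    exact zero_ne_one hrank
  obtain ⟨u, hu, v, hv, huv⟩ := nontrivial_extremePoints_of_nontrivial hF hconv hnt
  have : FiniteDimensional ℝ (vectorSpan ℝ F) := Module.finite_of_finrank_eq_succ hrank
  exact ⟨u, hu, v, hv, huv, (hconv.segment_subset hu.1 hv.1).antisymm
    (subset_segment_of_collinear hu hv huv (collinear_iff_finrank_le_one.2 hrank.le))⟩

/-- The graph (1-skeleton) of a convex set: its vertices are the extreme points, and two of them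
are joined when the segment between them is an exposed face. -/
def edgeGraph (P : Set E) : SimpleGraph (P.extremePoints ℝ) where
  Adj u v := u ≠ v ∧ IsExposed ℝ P (segment ℝ (u : E) v)
  symm := ⟨fun u v h => ⟨h.1.symm, segment_symm ℝ (u : E) v ▸ h.2⟩⟩
  loopless := ⟨fun _ h => h.1 rfl⟩

/-- The segment spanned by an unordered pair of extreme points. -/
def pairSegment (P : Set E) (e : Sym2 (P.extremePoints ℝ)) : Set E :=
  convexHull ℝ ((↑) '' (e : Set (P.extremePoints ℝ)))

theorem pairSegment_mk (u v : P.extremePoints ℝ) : pairSegment P s(u, v) = segment ℝ (u : E) v := by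
  rw [pairSegment, Sym2.coe_mk, Set.image_pair, convexHull_pair]

theorem coe_mem_pairSegment_iff (hconv : Convex ℝ P) {e : Sym2 (P.extremePoints ℝ)}
    {w : P.extremePoints ℝ} : (w : E) ∈ pairSegment P e ↔ w ∈ e := by
  refine ⟨fun hw => ?_, fun hw => subset_convexHull ℝ _ (Set.mem_image_of_mem _ hw)⟩
  have hsub : pairSegment P e ⊆ P :=
    convexHull_min (Set.image_subset_iff.2 fun v _ => v.2.1) hconv
  obtain ⟨v, hv, hvw⟩ := extremePoints_convexHull_subset
    (inter_extremePoints_subset_extremePoints_of_subset hsub ⟨hw, w.2⟩)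
  exact Subtype.ext hvw ▸ hv

theorem injective_pairSegment (hconv : Convex ℝ P) : Function.Injective (pairSegment P) := by
  intro e e' h
  ext w
  rw [← coe_mem_pairSegment_iff hconv, h, coe_mem_pairSegment_iff hconv]

theorem image_pairSegment_edgeSet (hP : IsCompact P) (hconv : Convex ℝ P) :
    pairSegment P '' (edgeGraph P).edgeSet =
      {F | IsExposed ℝ P F ∧ F.Nonempty ∧ Module.finrank ℝ (vectorSpan ℝ F) = 1} := by
  ext F
  constructor
  · rintro ⟨e, he, rfl⟩
    induction e with | h u v
    rw [pairSegment_mk]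
    exact ⟨he.2, ⟨u, left_mem_segment ℝ _ _⟩,
      finrank_vectorSpan_segment (Subtype.coe_injective.ne he.1)⟩
  · rintro ⟨hF, -, hrank⟩
    obtain ⟨u, hu, v, hv, huv, rfl⟩ := exists_eq_segment_of_finrank_vectorSpan_eq_one
      (hF.isCompact hP) (hF.convex hconv) hrank
    have hsub := hF.isExtreme.extremePoints_subset_extremePoints
    exact ⟨s(⟨u, hsub hu⟩, ⟨v, hsub hv⟩), ⟨by simpa using huv, hF⟩, pairSegment_mk _ _⟩

end EdgeGraph

section Translates

open MeasureTheory

variable {E : Type*} [NormedAddCommGroup E] [NormedSpace ℝ E] {P F : Set E} {u v : E}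

theorem disjoint_interior_of_isExposed_of_ne (hF : IsExposed ℝ P F) (hne : F ≠ P) :
    Disjoint F (interior P) := by
  rw [Set.disjoint_left]
  intro x hxF hx
  obtain ⟨l, rfl⟩ := hF ⟨x, hxF⟩
  have hmax : IsLocalMax l x :=
    Filter.mem_of_superset (mem_interior_iff_mem_nhds.1 hx) hxF.2
  have hl : l = 0 := hmax.hasFDerivAt_eq_zero l.hasFDerivAt
  exact hne (by simp [hl])

theorem disjoint_vadd_interior_of_disjoint_segment (hconv : Convex ℝ P) (hneg : P = -P)
    (huv : Disjoint (segment ℝ u v) (interior P)) :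
    Disjoint (u +ᵥ interior P) (-v +ᵥ interior P) := by
  rw [Set.disjoint_left] at huv ⊢
  rintro _ ⟨p, hp, rfl⟩ ⟨q, hq, hpq⟩
  -- From `u + p = -v + q`, the midpoint of `u` and `v` is also the midpoint of `q` and `-p`.
  refine huv ((convex_segment u v).midpoint_mem (left_mem_segment ..) (right_mem_segment ..)) ?_
  have hp' : -p ∈ interior P := by
    rw [hneg] at hp
    exact ((Homeomorph.neg E).preimage_interior P).superset hp
  have huv' : u + v = q + -p := by
    have hqp : q = v + (u + p) := neg_add_eq_iff_eq_add.1 hpq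
    rw [hqp]
    abel
  rw [midpoint_eq_smul_add, huv', ← midpoint_eq_smul_add]
  exact hconv.interior.midpoint_mem hq hp'

variable [FiniteDimensional ℝ E]

theorem card_le_two_pow_finrank_of_pairwiseDisjoint_vadd_interior (hconv : Convex ℝ P)
    (hb : Bornology.IsBounded P) (hint : (interior P).Nonempty) {S : Finset E} (hS : ↑S ⊆ P)
    (hdisj : (S : Set E).PairwiseDisjoint (· +ᵥ interior P)) :
    S.card ≤ 2 ^ Module.finrank ℝ E := by
  borelize E
  let μ : Measure E := Measure.addHaar
  have hpos : μ (interior P) ≠ 0 := (isOpen_interior.measure_pos μ hint).ne'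
  have hfin : μ (interior P) ≠ ⊤ := (hb.subset interior_subset).measure_lt_top.ne
  have hunion : μ (⋃ u ∈ S, u +ᵥ interior P) = S.card * μ (interior P) := by
    rw [measure_biUnion_finset hdisj fun u _ => (isOpen_interior.vadd u).measurableSet]
    simp
  have hsub : ⋃ u ∈ S, u +ᵥ interior P ⊆ (2 : ℝ) • interior P := by
    refine Set.iUnion₂_subset fun u hu => ?_
    rintro _ ⟨p, hp, rfl⟩
    refine ⟨(2⁻¹ : ℝ) • u + (2⁻¹ : ℝ) • p, hconv.combo_self_interior_mem_interior (hS hu) hp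
      (by norm_num) (by norm_num) (by norm_num), ?_⟩
    simp only [smul_add, smul_inv_smul₀ (two_ne_zero' ℝ), vadd_eq_add]
  have hle : S.card * μ (interior P) ≤ 2 ^ Module.finrank ℝ E * μ (interior P) := by
    calc S.card * μ (interior P) ≤ μ ((2 : ℝ) • interior P) := hunion ▸ measure_mono hsub
      _ = 2 ^ Module.finrank ℝ E * μ (interior P) := by
        rw [Measure.addHaar_smul_of_nonneg μ two_pos.le, ENNReal.ofReal_pow two_pos.le,
          ENNReal.ofReal_ofNat]
  exact_mod_cast (ENNReal.mul_le_mul_iff_left hpos hfin).1 hle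

end Translates

section Turan

variable {V : Type*} {G H : SimpleGraph V}

theorem ncard_edgeSet_le_of_injective_of_adj [Finite V] {σ : V → V} (hσ : σ.Injective)
    (hadj : ∀ u v, H.Adj u v → G.Adj u (σ v)) : H.edgeSet.ncard ≤ G.edgeSet.ncard := by
  classical
  have := Fintype.ofFinite V
  have hinj : Function.Injective fun e : H.Dart =>
      (⟨(e.fst, σ e.snd), hadj _ _ e.adj⟩ : G.Dart) := by
    intro e e' h
    simp only [SimpleGraph.Dart.mk.injEq, Prod.mk.injEq] at h
    exact SimpleGraph.Dart.ext _ _ (Prod.ext h.1 (hσ h.2))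
  have hcard := Fintype.card_le_of_injective _ hinj
  rw [H.dart_card_eq_twice_card_edges, G.dart_card_eq_twice_card_edges] at hcard
  rw [← H.coe_edgeFinset, ← G.coe_edgeFinset, Set.ncard_coe_finset, Set.ncard_coe_finset]
  exact Nat.le_of_mul_le_mul_left hcard two_pos

theorem two_mul_mul_ncard_edgeSet_le_of_cliqueFree [Finite V] {r : ℕ} (hG : G.CliqueFree (r + 1)) :
    2 * r * G.edgeSet.ncard ≤ (r - 1) * Nat.card V ^ 2 := by
  classical
  have := Fintype.ofFinite V
  have hturan : G.edgeFinset.card ≤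
      (SimpleGraph.turanGraph (Fintype.card V) r).edgeFinset.card :=
    hG.card_edgeFinset_le.trans_eq SimpleGraph.card_edgeFinset_turanGraph.symm
  rw [← G.coe_edgeFinset, Set.ncard_coe_finset, Nat.card_eq_fintype_card]
  exact (Nat.mul_le_mul_left _ hturan).trans SimpleGraph.mul_card_edgeFinset_turanGraph_le

end Turan

section UpperBound

variable {E : Type*} [NormedAddCommGroup E] [NormedSpace ℝ E] {P : Set E}

theorem neg_mem_extremePoints (hneg : P = -P) {v : E} (hv : v ∈ P.extremePoints ℝ) :
    -v ∈ P.extremePoints ℝ := by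
  have himage := image_extremePoints (LinearEquiv.neg ℝ : E ≃ₗ[ℝ] E) P
  have hP : (LinearEquiv.neg ℝ : E ≃ₗ[ℝ] E) '' P = P := Set.image_neg_eq_neg.trans hneg.symm
  rw [hP] at himage
  exact himage ▸ Set.mem_image_of_mem _ hv

theorem segment_ne_of_interior_nonempty (hrank : 2 ≤ Module.finrank ℝ E)
    (hint : (interior P).Nonempty) (u v : E) : segment ℝ u v ≠ P := by
  rintro rfl
  rw [← convexHull_pair] at hint
  have hspan := affineSpan_eq_top_of_nonempty_interior hint
  have := (collinear_pair ℝ u v).finrank_le_one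
  rw [← direction_affineSpan, hspan, AffineSubspace.direction_top, finrank_top] at this
  lia

/-- The graph joining two points of the space when they translate the interior of `P` to disjoint
sets. Its cliques are packings by translates of `P`. -/
def packingGraph (P : Set E) : SimpleGraph E where
  Adj u v := u ≠ v ∧ Disjoint (u +ᵥ interior P) (v +ᵥ interior P)
  symm := ⟨fun _ _ h => ⟨h.1.symm, h.2.symm⟩⟩
  loopless := ⟨fun _ h => h.1 rfl⟩

theorem packingGraph_adj_neg_of_edgeGraph_adj (hconv : Convex ℝ P) (hneg : P = -P)
    (hint : (interior P).Nonempty) (hrank : 2 ≤ Module.finrank ℝ E) {u v : P.extremePoints ℝ}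
    (huv : (edgeGraph P).Adj u v) : (packingGraph P).Adj u (-v) := by
  have hdisj := disjoint_vadd_interior_of_disjoint_segment hconv hneg
    (disjoint_interior_of_isExposed_of_ne huv.2 (segment_ne_of_interior_nonempty hrank hint u v))
  refine ⟨fun h => ?_, hdisj⟩
  rw [← h, disjoint_self] at hdisj
  exact hint.vadd_set.ne_empty hdisj

variable [FiniteDimensional ℝ E]

theorem cliqueFreeOn_packingGraph (hconv : Convex ℝ P) (hb : Bornology.IsBounded P)
    (hint : (interior P).Nonempty) :
    (packingGraph P).CliqueFreeOn P (2 ^ Module.finrank ℝ E + 1) := by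
  intro S hSP hS
  have := card_le_two_pow_finrank_of_pairwiseDisjoint_vadd_interior hconv hb hint hSP
    fun u hu v hv huv => (hS.isClique hu hv huv).2
  rw [hS.card_eq] at this
  lia

theorem ncard_edgeSet_edgeGraph_le (hconv : Convex ℝ P) (hb : Bornology.IsBounded P)
    (hneg : P = -P) (hint : (interior P).Nonempty) (hrank : 2 ≤ Module.finrank ℝ E)
    (hfin : (P.extremePoints ℝ).Finite) :
    2 * 2 ^ Module.finrank ℝ E * (edgeGraph P).edgeSet.ncard ≤
      (2 ^ Module.finrank ℝ E - 1) * (P.extremePoints ℝ).ncard ^ 2 := by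
  have : Finite (P.extremePoints ℝ) := hfin
  let G := (packingGraph P).induce (P.extremePoints ℝ)
  have hG : G.CliqueFree (2 ^ Module.finrank ℝ E + 1) := (SimpleGraph.cliqueFree_induce_iff _ _ _).2
    (.subset _ extremePoints_subset (cliqueFreeOn_packingGraph hconv hb hint))
  have hle : (edgeGraph P).edgeSet.ncard ≤ G.edgeSet.ncard :=
    ncard_edgeSet_le_of_injective_of_adj
      (σ := fun v => ⟨-v, neg_mem_extremePoints hneg v.2⟩)
      (fun v w h => by simpa [Subtype.ext_iff] using h)
      (fun u v huv => packingGraph_adj_neg_of_edgeGraph_adj hconv hneg hint hrank huv)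
  grw [hle, two_mul_mul_ncard_edgeSet_le_of_cliqueFree hG, Nat.card_coe_set_eq]

end UpperBound

section Fmax

variable {d : ℕ} {P : Set (EuclideanSpace ℝ (Fin d))}

theorem IsCSPolytope.convex (hP : IsCSPolytope P) : Convex ℝ P := by
  obtain ⟨⟨V, rfl⟩, -⟩ := hP
  exact convex_convexHull ℝ _

theorem IsCSPolytope.isCompact (hP : IsCSPolytope P) : IsCompact P := by
  obtain ⟨⟨V, rfl⟩, -⟩ := hP
  exact V.finite_toSet.isCompact_convexHull ℝ

theorem IsCSPolytope.finite_extremePoints (hP : IsCSPolytope P) : (P.extremePoints ℝ).Finite := by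
  obtain ⟨⟨V, rfl⟩, -⟩ := hP
  exact V.finite_toSet.subset extremePoints_convexHull_subset

theorem IsCSPolytope.faceCount_one (hP : IsCSPolytope P) :
    faceCount P 1 = (edgeGraph P).edgeSet.ncard := by
  rw [faceCount, ← image_pairSegment_edgeSet hP.isCompact hP.convex,
    Set.ncard_image_of_injective _ (injective_pairSegment hP.convex)]

theorem IsCSPolytope.faceCount_one_le (hd : 2 ≤ d) (hP : IsCSPolytope P)
    (hspan : affineSpan ℝ P = ⊤) :
    faceCount P 1 ≤ (2 ^ d - 1) * (P.extremePoints ℝ).ncard ^ 2 / (2 * 2 ^ d) := by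
  have hint := hP.convex.interior_nonempty_iff_affineSpan_eq_top.2 hspan
  rw [Nat.le_div_iff_mul_le (by positivity), mul_comm, hP.faceCount_one]
  simpa using ncard_edgeSet_edgeGraph_le hP.convex hP.isCompact.isBounded hP.2 hint
    (by simpa using hd) hP.finite_extremePoints

theorem fmax_one_le (hd : 2 ≤ d) (n : ℕ) :
    fmax d n 1 ≤ (2 ^ d - 1) * n ^ 2 / (2 * 2 ^ d) := by
  apply csSup_le'
  rintro _ ⟨P, hP, hspan, rfl, rfl⟩
  exact hP.faceCount_one_le hd hspan

theorem IsCSPolytope.faceCount_one_le_fmax (hd : 2 ≤ d) (hP : IsCSPolytope P)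
    (hspan : affineSpan ℝ P = ⊤) : faceCount P 1 ≤ fmax d (P.extremePoints ℝ).ncard 1 := by
  refine le_csSup ⟨(2 ^ d - 1) * (P.extremePoints ℝ).ncard ^ 2 / (2 * 2 ^ d), ?_⟩
    ⟨P, hP, hspan, rfl, rfl⟩
  rintro _ ⟨Q, hQ, hspanQ, hcard, rfl⟩
  exact hcard ▸ hQ.faceCount_one_le hd hspanQ

theorem cast_fmax_one_le (hd : 2 ≤ d) (n : ℕ) :
    (fmax d n 1 : ℝ) ≤ (1 - (2 : ℝ) ^ (-(d : ℤ))) * (n : ℝ) ^ 2 / 2 := by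
  calc (fmax d n 1 : ℝ) ≤ ((2 ^ d - 1) * n ^ 2 / (2 * 2 ^ d) : ℕ) := mod_cast fmax_one_le hd n
    _ ≤ ((2 ^ d - 1) * n ^ 2 : ℕ) / (2 * 2 ^ d : ℕ) := Nat.cast_div_le
    _ = (1 - (2 : ℝ) ^ (-(d : ℤ))) * (n : ℝ) ^ 2 / 2 := by
      push_cast [Nat.one_le_two_pow]
      rw [zpow_neg, zpow_natCast]
      field_simp

end Fmax

section ConvexHull

variable {E : Type*} [AddCommGroup E] [Module ℝ E] {S V : Set E}

theorem mem_convexHull_or_lt_of_mem_convexHull (l : E →ₗ[ℝ] ℝ) {M : ℝ}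
    (hS : ∀ x ∈ S, l x = M) (hlt : ∀ x ∈ V \ S, l x < M) {x : E} (hx : x ∈ convexHull ℝ V) :
    x ∈ convexHull ℝ S ∨ l x < M := by
  have hSM : ∀ y ∈ convexHull ℝ S, l y = M :=
    convexHull_min hS (convex_hyperplane l.isLinear M)
  have hconv : Convex ℝ (convexHull ℝ S ∪ {y | l y < M}) := by
    rw [convex_iff_forall_pos]
    have hle : ∀ y ∈ convexHull ℝ S ∪ {y | l y < M}, l y ≤ M :=
      fun y hy => hy.elim (fun h => (hSM y h).le) fun h => le_of_lt h
    rintro y hy z hz a b ha hb hab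
    by_cases hyz : y ∈ convexHull ℝ S ∧ z ∈ convexHull ℝ S
    · exact .inl (convex_convexHull ℝ S hyz.1 hyz.2 ha.le hb.le hab)
    right
    calc l (a • y + b • z) = a * l y + b * l z := by simp
      _ < a * M + b * M := by
        rcases not_and_or.1 hyz with h | h
        · exact add_lt_add_of_lt_of_le (by gcongr; exact hy.resolve_left h) (by grw [hle z hz])
        · exact add_lt_add_of_le_of_lt (by grw [hle y hy]) (by gcongr; exact hz.resolve_left h)
      _ = M := by rw [← add_mul, hab, one_mul]
  refine convexHull_min (fun y hy => ?_) hconv hx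
  by_cases hyS : y ∈ S
  · exact .inl (subset_convexHull ℝ S hyS)
  · exact .inr (hlt y ⟨hy, hyS⟩)

theorem isExposed_convexHull_of_forall_lt [TopologicalSpace E] (hSV : S ⊆ V) (l : StrongDual ℝ E)
    {M : ℝ} (hS : ∀ x ∈ S, l x = M) (hlt : ∀ x ∈ V \ S, l x < M) :
    IsExposed ℝ (convexHull ℝ V) (convexHull ℝ S) := by
  intro hne
  obtain ⟨s, hs⟩ := convexHull_nonempty_iff.1 hne
  have hSM : ∀ y ∈ convexHull ℝ S, l y = M :=
    convexHull_min hS (convex_hyperplane l.toLinearMap.isLinear M)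
  have hV := fun x => mem_convexHull_or_lt_of_mem_convexHull (x := x) l.toLinearMap hS hlt
  refine ⟨l, Set.Subset.antisymm (fun x hx => ⟨convexHull_mono hSV hx, fun y hy => ?_⟩) ?_⟩
  · rw [hSM x hx]
    exact (hV y hy).elim (fun h => (hSM y h).le) fun h => h.le
  · rintro x ⟨hx, hmax⟩
    refine (hV x hx).resolve_right (not_lt.2 ?_)
    rw [← hS s hs]
    exact hmax s (subset_convexHull ℝ V (hSV hs))

theorem affineSpan_eq_top_of_eq_neg_of_span_eq_top (hne : S.Nonempty) (hneg : S = -S)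
    (hspan : Submodule.span ℝ S = ⊤) : affineSpan ℝ S = ⊤ := by
  rw [AffineSubspace.affineSpan_eq_top_iff_vectorSpan_eq_top_of_nonempty ℝ E E hne,
    eq_top_iff, ← hspan, Submodule.span_le]
  intro x hx
  have hx' : -x ∈ S := by rw [hneg]; simpa using hx
  have h := (vectorSpan ℝ S).smul_mem 2⁻¹ (vsub_mem_vectorSpan ℝ hx hx')
  rwa [vsub_eq_sub, sub_neg_eq_add, ← two_smul ℝ, inv_smul_smul₀ two_ne_zero] at h

end ConvexHull

section TrigForms

/-- Homogeneous trigonometric forms of degree `m`: the functions `p (cos θ, sin θ)` with `p` a real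
binary form of degree `m`, realised as a power of the span of `cos` and `sin`. -/
def trigForms (m : ℕ) : Submodule ℝ (Angle → ℝ) := Submodule.span ℝ {Angle.cos, Angle.sin} ^ m

theorem mul_mem_trigForms {m n : ℕ} {f g : Angle → ℝ} (hf : f ∈ trigForms m)
    (hg : g ∈ trigForms n) : f * g ∈ trigForms (m + n) := by
  rw [trigForms, pow_add]
  exact Submodule.mul_mem_mul hf hg

theorem mem_trigForms_add_two {m : ℕ} {f : Angle → ℝ} (hf : f ∈ trigForms m) :
    f ∈ trigForms (m + 2) := by
  have hcos : Angle.cos ∈ trigForms 1 := by simpa [trigForms] using Submodule.subset_span (by simp)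
  have hsin : Angle.sin ∈ trigForms 1 := by simpa [trigForms] using Submodule.subset_span (by simp)
  have hone : Angle.cos * Angle.cos + Angle.sin * Angle.sin = (1 : Angle → ℝ) := by
    ext θ
    simpa [sq] using Angle.cos_sq_add_sin_sq θ
  have := mul_mem_trigForms hf (add_mem (mul_mem_trigForms hcos hcos) (mul_mem_trigForms hsin hsin))
  rwa [hone, mul_one] at this

theorem cos_sub_mem_trigForms_one (μ : Angle) : (fun θ => (θ - μ).cos) ∈ trigForms 1 := by
  rw [trigForms, pow_one, Submodule.mem_span_pair]
  refine ⟨μ.cos, μ.sin, ?_⟩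
  ext θ
  simp [sub_eq_add_neg, Angle.cos_add]
  ring

open Polynomial.Chebyshev in
theorem chebyshevT_comp_mem_trigForms {f : Angle → ℝ} (hf : f ∈ trigForms 1) (n : ℕ) :
    (fun θ => (T ℝ n).eval (f θ)) ∈ trigForms n := by
  induction n using Nat.twoStepInduction with
  | zero =>
    rw [trigForms, pow_zero]
    exact Submodule.mem_one.2 ⟨1, by ext; simp⟩
  | one => simpa using hf
  | more n h1 h2 =>
    have hmul := Submodule.smul_mem _ (2 : ℝ) (mul_mem_trigForms h2 hf)
    have h := Submodule.sub_mem _ hmul (mem_trigForms_add_two h1)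
    convert h using 1
    ext θ
    have hT := congrArg (Polynomial.eval (f θ)) (T_add_two ℝ n)
    push_cast at hT ⊢
    simp only [hT, Polynomial.eval_sub, Polynomial.eval_mul, Polynomial.eval_ofNat,
      Polynomial.eval_X, Pi.sub_apply, Pi.smul_apply, Pi.mul_apply, smul_eq_mul]
    ring

/-- The homogeneous trigonometric moment curve `θ ↦ (cos θ ^ i * sin θ ^ (m - i))_{0 ≤ i ≤ m}`. -/
noncomputable def trigCurve (m : ℕ) (θ : Angle) : EuclideanSpace ℝ (Fin (m + 1)) :=
  WithLp.toLp 2 fun i => θ.cos ^ (i : ℕ) * θ.sin ^ (i.rev : ℕ)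

theorem exists_eq_pow_mul_pow_rev_of_mem_pair_pow {M : Type*} [CommMonoid M] {a b x : M} {m : ℕ}
    (hx : x ∈ ({a, b} : Set M) ^ m) : ∃ i : Fin (m + 1), a ^ (i : ℕ) * b ^ (i.rev : ℕ) = x := by
  induction m generalizing x with
  | zero => simpa [eq_comm] using hx
  | succ m ih =>
    rw [pow_succ] at hx
    obtain ⟨y, hy, c, hc, rfl⟩ := hx
    obtain ⟨i, rfl⟩ := ih hy
    rcases hc with rfl | rfl
    · refine ⟨i.succ, ?_⟩
      simp only [Fin.rev_succ, Fin.val_succ, Fin.val_castSucc, pow_succ, mul_right_comm]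
    · refine ⟨i.castSucc, ?_⟩
      simp only [Fin.rev_castSucc, Fin.val_succ, Fin.val_castSucc, pow_succ, mul_assoc]

theorem exists_strongDual_trigCurve_eq {m : ℕ} {f : Angle → ℝ} (hf : f ∈ trigForms m) :
    ∃ l : StrongDual ℝ (EuclideanSpace ℝ (Fin (m + 1))), ∀ θ, l (trigCurve m θ) = f θ := by
  rw [trigForms, Submodule.span_pow] at hf
  induction hf using Submodule.span_induction with
  | mem f hf =>
    obtain ⟨i, rfl⟩ := exists_eq_pow_mul_pow_rev_of_mem_pair_pow hf
    exact ⟨EuclideanSpace.proj i, fun θ => rfl⟩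
  | zero => exact ⟨0, fun θ => rfl⟩
  | add f g _ _ hf hg =>
    obtain ⟨l, hl⟩ := hf
    obtain ⟨l', hl'⟩ := hg
    exact ⟨l + l', fun θ => by simp [hl, hl']⟩
  | smul a f _ hf =>
    obtain ⟨l, hl⟩ := hf
    exact ⟨a • l, fun θ => by simp [hl]⟩

theorem trigCurve_add_pi {m : ℕ} (hm : Odd m) (θ : Angle) :
    trigCurve m (θ + π) = -trigCurve m θ := by
  ext i
  have hpow : (-1 : ℝ) ^ (i : ℕ) * (-1) ^ (i.rev : ℕ) = -1 := by
    rw [← pow_add, add_comm, Fin.rev_add_cast, hm.neg_one_pow]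
  simp only [trigCurve, PiLp.neg_apply, Angle.cos_add_pi, Angle.sin_add_pi, neg_pow θ.cos,
    neg_pow θ.sin]
  linear_combination θ.cos ^ (i : ℕ) * θ.sin ^ (i.rev : ℕ) * hpow

theorem injective_trigCurve {m : ℕ} (hm : Odd m) : Function.Injective (trigCurve m) := by
  intro θ ψ h
  have hcos : θ.cos ^ m = ψ.cos ^ m := by simpa [trigCurve] using congrArg (· (Fin.last m)) h
  have hsin : θ.sin ^ m = ψ.sin ^ m := by simpa [trigCurve] using congrArg (· 0) h
  rw [← Angle.coe_toReal θ, ← Angle.coe_toReal ψ]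
  exact Angle.cos_sin_inj (by simpa using hm.pow_injective hcos)
    (by simpa using hm.pow_injective hsin)

theorem span_trigCurve_eq_top {m : ℕ} {A : Set Angle} (θ : Fin (m + 1) → Angle) (hA : ∀ i, θ i ∈ A)
    (hθ : Pairwise fun i j => (θ i - θ j).sin ≠ 0) :
    Submodule.span ℝ (trigCurve m '' A) = ⊤ := by
  have hdet : (Matrix.projVandermonde (Angle.cos ∘ θ) (Angle.sin ∘ θ)).det ≠ 0 := by
    rw [Matrix.det_projVandermonde]
    refine Finset.prod_ne_zero_iff.2 fun i _ => Finset.prod_ne_zero_iff.2 fun j hj => ?_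
    have := hθ (Finset.mem_Ioi.1 hj).ne
    simpa [sub_eq_add_neg, Angle.sin_add, mul_comm] using this
  have hind : LinearIndependent ℝ (trigCurve m ∘ θ) :=
    (Matrix.linearIndependent_rows_of_det_ne_zero hdet).map'
      (WithLp.linearEquiv 2 ℝ (Fin (m + 1) → ℝ)).symm.toLinearMap (LinearEquiv.ker _)
  rw [eq_top_iff, ← hind.span_eq_top_of_card_eq_finrank' (by simp)]
  exact Submodule.span_mono (by rintro _ ⟨i, rfl⟩; exact ⟨_, hA i, rfl⟩)

end TrigForms

section Chebyshev

open Polynomial Polynomial.Chebyshev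

theorem neg_one_pow_mul_eval_T_sin_odd (k : ℕ) (ψ : ℝ) :
    (-1) ^ k * (T ℝ (2 * k + 1 : ℕ)).eval (sin ψ) = sin ((2 * k + 1) * ψ) := by
  rw [← cos_pi_div_two_sub ψ, T_real_cos,
    show ((2 * k + 1 : ℕ) : ℤ) * (π / 2 - ψ) = k * π - ((2 * k + 1) * ψ - π / 2) by push_cast; ring,
    cos_nat_mul_pi_sub, cos_sub_pi_div_two, ← mul_assoc, ← mul_pow, neg_one_mul, neg_neg, one_pow,
    one_mul]

theorem neg_one_pow_mul_eval_T_sin_even (k : ℕ) (ψ : ℝ) :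
    (-1) ^ k * (T ℝ (2 * k : ℕ)).eval (sin ψ) = cos (2 * k * ψ) := by
  rw [← cos_pi_div_two_sub ψ, T_real_cos,
    show ((2 * k : ℕ) : ℤ) * (π / 2 - ψ) = k * π - 2 * k * ψ by push_cast; ring,
    cos_nat_mul_pi_sub, ← mul_assoc, ← mul_pow, neg_one_mul, neg_neg, one_pow, one_mul]

/-- The smallest positive point at which the Chebyshev polynomial `T (2 * k + 1)` is `±1`. -/
noncomputable def chebyshevNode (k : ℕ) : ℝ := sin (π / (2 * (2 * k + 1)))

/-- The Chebyshev polynomial `T (2 * k + 1)`, with its sign chosen so that its value at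
`chebyshevNode k` is `1`, perturbed by a term equal to `-δ * y ^ 2` at every `y ∈ [-1, 1]` where
that value is attained. For small `δ > 0` this favours the node over the other maxima. -/
noncomputable def peakPoly (k : ℕ) (δ : ℝ) : ℝ[X] :=
  C ((-1) ^ k) * (T ℝ (2 * k + 1 : ℕ) - C δ * X * T ℝ (2 * k : ℕ))

theorem nodeAngle_mem_Ioc (k : ℕ) : π / (2 * (2 * k + 1)) ∈ Set.Ioc 0 (π / 2) := by
  refine ⟨by positivity, ?_⟩
  gcongr
  norm_cast
  lia

theorem chebyshevNode_pos (k : ℕ) : 0 < chebyshevNode k := by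
  obtain ⟨h0, h1⟩ := nodeAngle_mem_Ioc k
  exact sin_pos_of_pos_of_lt_pi h0 (by linarith [pi_pos])

theorem neg_one_pow_mul_eval_T_even_of_odd_eq_one {k : ℕ} {y : ℝ} (hy : |y| ≤ 1)
    (h : (-1) ^ k * (T ℝ (2 * k + 1 : ℕ)).eval y = 1) :
    (-1) ^ k * (T ℝ (2 * k : ℕ)).eval y = y := by
  obtain ⟨hy1, hy2⟩ := abs_le.1 hy
  rw [← sin_arcsin hy1 hy2] at h ⊢
  rw [neg_one_pow_mul_eval_T_sin_odd] at h
  have hcos : cos ((2 * k + 1) * arcsin y) = 0 := by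
    have := sin_sq_add_cos_sq ((2 * k + 1) * arcsin y)
    simpa [h] using this
  rw [neg_one_pow_mul_eval_T_sin_even,
    show 2 * k * arcsin y = (2 * k + 1) * arcsin y - arcsin y by ring, cos_sub, h, hcos]
  ring

theorem neg_one_pow_mul_eval_T_chebyshevNode (k : ℕ) :
    (-1) ^ k * (T ℝ (2 * k + 1 : ℕ)).eval (chebyshevNode k) = 1 := by
  rw [chebyshevNode, neg_one_pow_mul_eval_T_sin_odd,
    show (2 * k + 1) * (π / (2 * (2 * k + 1))) = π / 2 by field_simp, sin_pi_div_two]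

theorem chebyshevNode_lt_abs {k : ℕ} {y : ℝ} (hy : |y| ≤ 1) (hne : y ≠ chebyshevNode k)
    (h : (-1) ^ k * (T ℝ (2 * k + 1 : ℕ)).eval y = 1) : chebyshevNode k < |y| := by
  by_contra! hle
  obtain ⟨hβ0, hβ⟩ := nodeAngle_mem_Ioc k
  set β := π / (2 * (2 * (k : ℝ) + 1)) with hβdef
  have hsin : arcsin (sin β) = β := arcsin_sin (by linarith) hβ
  have hψ : |arcsin y| ≤ β := by
    rw [abs_le, ← hsin, ← arcsin_neg]
    exact (abs_le.1 hle).imp (monotone_arcsin ·) (monotone_arcsin ·)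
  have hmul : (2 * k + 1) * β = π / 2 := by rw [hβdef]; field_simp
  have hmem : (2 * k + 1) * arcsin y ∈ Set.Icc (-(π / 2)) (π / 2) := by
    rw [Set.mem_Icc, ← abs_le, abs_mul, abs_of_nonneg (by positivity), ← hmul]
    gcongr
  obtain ⟨hy1, hy2⟩ := abs_le.1 hy
  rw [← sin_arcsin hy1 hy2, neg_one_pow_mul_eval_T_sin_odd] at h
  have heq : (2 * k + 1) * arcsin y = (2 * k + 1) * β :=
    (injOn_sin hmem ⟨by linarith [pi_pos], le_rfl⟩
      (h.trans sin_pi_div_two.symm)).trans hmul.symm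
  rw [mul_right_inj' (by positivity)] at heq
  exact hne (by rw [chebyshevNode, ← hβdef, ← heq, sin_arcsin hy1 hy2])

theorem eval_peakPoly (k : ℕ) (δ y : ℝ) : (peakPoly k δ).eval y =
    (-1) ^ k * (T ℝ (2 * k + 1 : ℕ)).eval y -
      δ * (y * ((-1) ^ k * (T ℝ (2 * k : ℕ)).eval y)) := by
  simp only [peakPoly, eval_mul, eval_sub, eval_C, eval_X]
  ring

theorem eval_peakPoly_of_odd_eq_one {k : ℕ} {y : ℝ} (hy : |y| ≤ 1)
    (h : (-1) ^ k * (T ℝ (2 * k + 1 : ℕ)).eval y = 1) (δ : ℝ) :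
    (peakPoly k δ).eval y = 1 - δ * y ^ 2 := by
  rw [eval_peakPoly, h, neg_one_pow_mul_eval_T_even_of_odd_eq_one hy h, sq]

open Filter in
theorem exists_peakPoly_eval_lt (k : ℕ) {Y : Finset ℝ} (hY : ∀ y ∈ Y, |y| ≤ 1) :
    ∃ δ, ∀ y ∈ Y, y ≠ chebyshevNode k →
      (peakPoly k δ).eval y < (peakPoly k δ).eval (chebyshevNode k) := by
  suffices h : ∀ᶠ δ in nhdsWithin (0 : ℝ) (Set.Ioi 0), ∀ y ∈ Y, y ≠ chebyshevNode k →
      (peakPoly k δ).eval y < (peakPoly k δ).eval (chebyshevNode k) from h.exists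
  rw [eventually_all_finset]
  intro y hyY
  rw [eventually_imp_distrib_left]
  intro hys
  have hTs := neg_one_pow_mul_eval_T_chebyshevNode k
  have hs1 : |chebyshevNode k| ≤ 1 := abs_sin_le_one _
  have hle : (-1) ^ k * (T ℝ (2 * k + 1 : ℕ)).eval y ≤ 1 := by
    refine (le_abs_self _).trans ?_
    rw [abs_mul, abs_neg_one_pow, one_mul]
    exact abs_eval_T_real_le_one _ (hY y hyY)
  rcases hle.lt_or_eq with hlt | heq
  · refine eventually_nhdsWithin_of_eventually_nhds ?_
    simp only [eval_peakPoly]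
    refine ContinuousAt.eventually_lt (by fun_prop) (by fun_prop) ?_
    simpa only [hTs, zero_mul, sub_zero] using hlt
  · filter_upwards [self_mem_nhdsWithin] with δ hδ
    have hδ : 0 < δ := hδ
    have hsq : chebyshevNode k ^ 2 < y ^ 2 := by
      rw [← sq_abs y]
      gcongr
      · exact (chebyshevNode_pos k).le
      · exact chebyshevNode_lt_abs (hY y hyY) hys heq
    rw [eval_peakPoly_of_odd_eq_one (hY y hyY) heq, eval_peakPoly_of_odd_eq_one hs1 hTs]
    gcongr

end Chebyshev

section TrigPolytope

theorem exists_mem_trigForms_forall_lt {k : ℕ} {τ : Angle} (hτ : chebyshevNode k ≤ τ.cos)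
    (μ : Angle) {A : Set Angle} (hA : A.Finite) :
    ∃ f ∈ trigForms (2 * k + 1), ∃ M, (∀ θ, (θ - μ).cos = τ.cos → f θ = M) ∧
      ∀ θ ∈ A, (θ - μ).cos ≠ τ.cos → f θ < M := by
  have hcos : 0 < τ.cos := (chebyshevNode_pos k).trans_le hτ
  set c := chebyshevNode k / τ.cos
  have hcτ : c * τ.cos = chebyshevNode k := div_mul_cancel₀ _ hcos.ne'
  have hc0 : 0 < c := div_pos (chebyshevNode_pos k) hcos
  have hc1 : c ≤ 1 := (div_le_one hcos).2 hτ
  have hle (θ : Angle) : |c * (θ - μ).cos| ≤ 1 := by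
    rw [abs_mul, abs_of_pos hc0, ← Angle.cos_toReal]
    exact mul_le_one₀ hc1 (abs_nonneg _) (abs_cos_le_one _)
  obtain ⟨δ, hδ⟩ := exists_peakPoly_eval_lt k (Y := (hA.image fun θ => c * (θ - μ).cos).toFinset)
    (by simpa only [Set.Finite.mem_toFinset, Set.forall_mem_image] using fun θ _ => hle θ)
  refine ⟨fun θ => (peakPoly k δ).eval (c * (θ - μ).cos), ?_,
    (peakPoly k δ).eval (chebyshevNode k), fun θ hθ => ?_, fun θ hθA hθ => ?_⟩
  · have hlin : (fun θ : Angle => c * (θ - μ).cos) ∈ trigForms 1 :=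
      Submodule.smul_mem _ c (cos_sub_mem_trigForms_one μ)
    have hodd := chebyshevT_comp_mem_trigForms hlin (2 * k + 1)
    have heven := mul_mem_trigForms (chebyshevT_comp_mem_trigForms hlin (2 * k)) hlin
    convert Submodule.smul_mem _ ((-1 : ℝ) ^ k)
      (Submodule.sub_mem _ hodd (Submodule.smul_mem _ δ heven)) using 1
    ext θ
    simp only [eval_peakPoly, Pi.smul_apply, Pi.sub_apply, Pi.mul_apply, smul_eq_mul]
    ring
  · simp only [hθ, hcτ]
  · refine hδ _ ((Set.Finite.mem_toFinset _).2 ⟨θ, hθA, rfl⟩) fun h => hθ ?_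
    rw [← hcτ] at h
    exact mul_left_cancel₀ hc0.ne' h

/-- The convex hull of the points of the trigonometric moment curve with parameters in `A`. -/
def trigPolytope (m : ℕ) (A : Set Angle) : Set (EuclideanSpace ℝ (Fin (m + 1))) :=
  convexHull ℝ (trigCurve m '' A)

theorem isExposed_trigPolytope {k : ℕ} {τ : Angle} (hτ : chebyshevNode k ≤ τ.cos) (μ : Angle)
    {A : Set Angle} (hA : A.Finite) :
    IsExposed ℝ (trigPolytope (2 * k + 1) A)
      (trigPolytope (2 * k + 1) {θ ∈ A | (θ - μ).cos = τ.cos}) := by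
  obtain ⟨f, hf, M, hM, hlt⟩ := exists_mem_trigForms_forall_lt hτ μ hA
  obtain ⟨l, hl⟩ := exists_strongDual_trigCurve_eq hf
  refine isExposed_convexHull_of_forall_lt (Set.image_mono fun θ hθ => hθ.1) l (M := M) ?_ ?_
  · rintro _ ⟨θ, hθ, rfl⟩
    rw [hl, hM θ hθ.2]
  · rintro _ ⟨⟨θ, hθ, rfl⟩, hθ'⟩
    rw [hl]
    exact hlt θ hθ fun h => hθ' ⟨θ, ⟨hθ, h⟩, rfl⟩

theorem isExposed_segment_trigCurve {k : ℕ} {μ τ : Angle} (hτ : chebyshevNode k ≤ τ.cos)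
    {A : Set Angle} (hA : A.Finite) (hsub : μ - τ ∈ A) (hadd : μ + τ ∈ A) :
    IsExposed ℝ (trigPolytope (2 * k + 1) A)
      (segment ℝ (trigCurve (2 * k + 1) (μ - τ)) (trigCurve (2 * k + 1) (μ + τ))) := by
  have hpair : {θ ∈ A | (θ - μ).cos = τ.cos} = {μ - τ, μ + τ} := by
    ext θ
    simp only [Set.mem_sep_iff, Angle.cos_eq_iff_eq_or_eq_neg, sub_eq_iff_eq_add',
      Set.mem_insert_iff, Set.mem_singleton_iff, ← sub_eq_add_neg]
    constructor
    · exact fun h => h.2.symm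
    · rintro (rfl | rfl)
      · exact ⟨hsub, .inr rfl⟩
      · exact ⟨hadd, .inl rfl⟩
  have h := isExposed_trigPolytope hτ μ hA
  rwa [hpair, trigPolytope.eq_1 _ {_, _}, Set.image_pair, convexHull_pair] at h

theorem extremePoints_trigPolytope (k : ℕ) {A : Set Angle} (hA : A.Finite) :
    (trigPolytope (2 * k + 1) A).extremePoints ℝ = trigCurve (2 * k + 1) '' A := by
  refine extremePoints_convexHull_subset.antisymm ?_
  rintro _ ⟨θ, hθ, rfl⟩
  have h := isExposed_segment_trigCurve (k := k) (μ := θ) (τ := 0)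
    (by simpa using! sin_le_one _) hA (by simpa) (by simpa)
  rw [sub_zero, add_zero, segment_same] at h
  exact exposedPoints_subset_extremePoints (mem_exposedPoints_iff_exposed_singleton.2 h)

theorem image_trigCurve_eq_neg {m : ℕ} (hm : Odd m) {A : Set Angle} (hπ : ∀ θ ∈ A, θ + π ∈ A) :
    trigCurve m '' A = -(trigCurve m '' A) := by
  have hneg : ∀ x ∈ trigCurve m '' A, -x ∈ trigCurve m '' A := by
    rintro _ ⟨θ, hθ, rfl⟩
    exact ⟨θ + π, hπ θ hθ, trigCurve_add_pi hm θ⟩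
  exact Set.Subset.antisymm hneg fun x hx => neg_neg x ▸ hneg _ hx

theorem isCSPolytope_trigPolytope {m : ℕ} (hm : Odd m) {A : Set Angle} (hA : A.Finite)
    (hπ : ∀ θ ∈ A, θ + π ∈ A) : IsCSPolytope (trigPolytope m A) := by
  refine ⟨⟨(hA.image (trigCurve m)).toFinset, by rw [Set.Finite.coe_toFinset, trigPolytope]⟩, ?_⟩
  rw [trigPolytope, ← convexHull_neg, ← image_trigCurve_eq_neg hm hπ]

theorem affineSpan_trigPolytope_eq_top {m : ℕ} (hm : Odd m) {ζ : Angle} (hζ : 2 * m < addOrderOf ζ)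
    {A : Set Angle} (hA : ∀ i : ℕ, i • ζ ∈ A) (hπ : ∀ θ ∈ A, θ + π ∈ A) :
    affineSpan ℝ (trigPolytope m A) = ⊤ := by
  rw [trigPolytope, affineSpan_convexHull]
  refine affineSpan_eq_top_of_eq_neg_of_span_eq_top ⟨_, _, hA 0, rfl⟩
    (image_trigCurve_eq_neg hm hπ) (span_trigCurve_eq_top (fun i => (i : ℕ) • ζ) (fun i => hA i) ?_)
  intro i j hij hsin
  have h2 : (2 * (i : ℕ)) • ζ = (2 * (j : ℕ)) • ζ := by
    rw [mul_nsmul', mul_nsmul', ← sub_eq_zero, ← nsmul_sub]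
    rwa [Angle.two_nsmul_eq_zero_iff, ← Angle.sin_eq_zero_iff]
  have := nsmul_injOn_Iio_addOrderOf (Set.mem_Iio.2 (by lia)) (Set.mem_Iio.2 (by lia)) h2
  exact hij (Fin.ext (by lia))

end TrigPolytope

section Circulant

theorem card_mul_le_ncard_edgeSet {Γ V : Type*} [AddCommGroup Γ] [Finite V] {G : SimpleGraph V}
    {v : Γ → V} (hv : Function.Injective v) {ζ : Γ} {R : ℕ} (hR : 2 * R < addOrderOf ζ)
    (hadj : ∀ θ, ∀ r ∈ Finset.Icc 1 R, G.Adj (v θ) (v (θ + r • ζ))) :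
    Nat.card Γ * R ≤ G.edgeSet.ncard := by
  let e : Γ × Finset.Icc 1 R → G.edgeSet :=
    fun x => ⟨s(v x.1, v (x.1 + x.2.1 • ζ)), hadj x.1 _ x.2.2⟩
  have he : Function.Injective e := by
    rintro ⟨θ, r, hr⟩ ⟨θ', r', hr'⟩ h
    rw [Finset.mem_Icc] at hr hr'
    have hs : s(v θ, v (θ + r • ζ)) = s(v θ', v (θ' + r' • ζ)) := congrArg Subtype.val h
    simp only [Sym2.eq_iff, hv.eq_iff] at hs
    rcases hs with ⟨rfl, h⟩ | ⟨rfl, h⟩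
    · have hrr' : r = r' :=
        nsmul_injOn_Iio_addOrderOf (Set.mem_Iio.2 (by lia)) (Set.mem_Iio.2 (by lia))
          (add_left_cancel h)
      simp [hrr']
    · rw [add_assoc, ← add_nsmul, add_eq_left] at h
      exact absurd h (nsmul_ne_zero_of_lt_addOrderOf (by lia) (by lia))
  have := Nat.card_le_card_of_injective e he
  simpa [-Finset.mem_Icc] using this

end Circulant

section LowerBound

theorem chebyshevNode_eq_cos (k : ℕ) : chebyshevNode k = cos (k * π / (2 * k + 1)) := by
  rw [chebyshevNode, ← cos_pi_div_two_sub]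
  congr 1
  field_simp
  ring

theorem chebyshevNode_le_cos {k n r : ℕ} (hr : r * (2 * k + 1) ≤ k * n) :
    chebyshevNode k ≤ cos (r * (π / n)) := by
  rcases n.eq_zero_or_pos with rfl | hn
  · simpa using! sin_le_one _
  rw [chebyshevNode_eq_cos]
  have hk : k * π / (2 * k + 1) ≤ π := by
    rw [div_le_iff₀ (by positivity)]
    nlinarith [pi_pos]
  refine cos_le_cos_of_nonneg_of_le_pi (by positivity) hk ?_
  have hr' : (r * (2 * k + 1) : ℝ) ≤ k * n := mod_cast hr
  rw [mul_div_assoc', div_le_div_iff₀ (by positivity) (by positivity)]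
  calc r * π * (2 * k + 1) = r * (2 * k + 1) * π := by ring
    _ ≤ k * n * π := by gcongr
    _ = k * π * n := by ring

theorem addOrderOf_mul_le_ncard_edgeSet_trigPolytope {k R : ℕ} {η : Angle}
    (hR : 2 * R < addOrderOf (2 • η)) (hcos : ∀ r ≤ R, chebyshevNode k ≤ (r • η).cos) :
    addOrderOf (2 • η) * R ≤
      (edgeGraph (trigPolytope (2 * k + 1) (AddSubgroup.zmultiples (2 • η)))).edgeSet.ncard := by
  set A := AddSubgroup.zmultiples (2 • η)
  have hA : (A : Set Angle).Finite :=
    (addOrderOf_pos_iff.1 (by lia)).finite_zmultiples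
  have hext := extremePoints_trigPolytope k hA
  have : Finite ((trigPolytope (2 * k + 1) (A : Set Angle)).extremePoints ℝ) :=
    hext ▸ hA.image (trigCurve (2 * k + 1))
  let v (θ : A) : (trigPolytope (2 * k + 1) (A : Set Angle)).extremePoints ℝ :=
    ⟨trigCurve (2 * k + 1) θ, hext ▸ ⟨θ, θ.2, rfl⟩⟩
  have hinj := injective_trigCurve (odd_two_mul_add_one k)
  have hv : Function.Injective v := fun θ φ h => Subtype.ext (hinj (congrArg Subtype.val h))
  let ζ : A := ⟨2 • η, AddSubgroup.mem_zmultiples _⟩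
  have hζ : addOrderOf ζ = addOrderOf (2 • η) := AddSubgroup.addOrderOf_mk _ _
  rw [← Nat.card_zmultiples]
  refine card_mul_le_ncard_edgeSet hv (ζ := ζ) (hζ ▸ hR) fun θ r hr => ?_
  rw [Finset.mem_Icc] at hr
  refine ⟨fun h => ?_, ?_⟩
  · have : r • ζ = 0 := by simpa using hv h
    exact nsmul_ne_zero_of_lt_addOrderOf (by lia) (by lia) this
  · have hsub : (θ : Angle) + r • η - r • η = θ := add_sub_cancel_right _ _
    have hadd : (θ : Angle) + r • η + r • η = (θ + r • ζ : A) := by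
      simp [ζ, add_assoc, ← two_nsmul, nsmul_left_comm]
    have h := isExposed_segment_trigCurve (hcos r hr.2) hA (hsub ▸ θ.2) (hadd ▸ (θ + r • ζ).2)
    rwa [hsub, hadd] at h

theorem addOrderOf_coe_two_pi_div {n : ℕ} (hn : 0 < n) :
    addOrderOf ((2 * π / n : ℝ) : Angle) = n :=
  have : Fact (0 < 2 * π) := ⟨two_pi_pos⟩
  AddCircle.addOrderOf_period_div hn

theorem coe_pi_mem_zmultiples {n : ℕ} (hn : Even n) (hn0 : 0 < n) :
    (π : Angle) ∈ AddSubgroup.zmultiples ((2 * π / n : ℝ) : Angle) := by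
  obtain ⟨m, rfl⟩ := hn
  have hm : (m : ℝ) ≠ 0 := mod_cast (by lia : m ≠ 0)
  refine AddSubgroup.mem_zmultiples_iff.2 ⟨m, ?_⟩
  rw [natCast_zsmul, ← Angle.coe_nsmul, nsmul_eq_mul, Nat.cast_add, ← two_mul]
  congr 1
  field_simp

theorem mul_div_le_fmax_one {k n : ℕ} (hn : Even n) (hkn : 2 * (2 * k + 1) < n) :
    n * (k * n / (2 * k + 1)) ≤ fmax (2 * k + 2) n 1 := by
  have hn0 : 0 < n := by lia
  let η : Angle := (π / n : ℝ)
  have hη : 2 • η = (2 * π / n : ℝ) := by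
    rw [← Angle.coe_nsmul, nsmul_eq_mul, Nat.cast_ofNat, mul_div_assoc]
  have horder : addOrderOf (2 • η) = n := by rw [hη, addOrderOf_coe_two_pi_div hn0]
  set A := AddSubgroup.zmultiples (2 • η)
  have hA : (A : Set Angle).Finite := (addOrderOf_pos_iff.1 (by lia)).finite_zmultiples
  have hπ : (π : Angle) ∈ A := by simpa only [A, hη] using coe_pi_mem_zmultiples hn hn0
  have hAπ : ∀ θ ∈ (A : Set Angle), θ + π ∈ (A : Set Angle) := fun θ hθ => A.add_mem hθ hπ
  have hodd : Odd (2 * k + 1) := odd_two_mul_add_one k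
  have hP := isCSPolytope_trigPolytope hodd hA hAπ
  have hspan := affineSpan_trigPolytope_eq_top hodd (horder.symm ▸ hkn)
    (fun i => A.nsmul_mem (AddSubgroup.mem_zmultiples _) i) hAπ
  have hcard : ((trigPolytope (2 * k + 1) (A : Set Angle)).extremePoints ℝ).ncard = n := by
    rw [extremePoints_trigPolytope k hA, Set.ncard_image_of_injective _ (injective_trigCurve hodd),
      ← Nat.card_coe_set_eq, SetLike.coe_sort_coe, Nat.card_zmultiples, horder]
  have hR : 2 * (k * n / (2 * k + 1)) < n := by
    have h := Nat.div_mul_le_self (k * n) (2 * k + 1)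
    by_contra!
    nlinarith
  have hcos (r : ℕ) (hr : r ≤ k * n / (2 * k + 1)) : chebyshevNode k ≤ (r • η).cos := by
    rw [← Angle.coe_nsmul, nsmul_eq_mul, Angle.cos_coe]
    exact chebyshevNode_le_cos ((Nat.le_div_iff_mul_le (by lia)).1 hr)
  calc n * (k * n / (2 * k + 1)) = addOrderOf (2 • η) * (k * n / (2 * k + 1)) := by rw [horder]
    _ ≤ (edgeGraph (trigPolytope (2 * k + 1) (A : Set Angle))).edgeSet.ncard :=
      addOrderOf_mul_le_ncard_edgeSet_trigPolytope (horder.symm ▸ hR) hcos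
    _ = faceCount (trigPolytope (2 * k + 1) (A : Set Angle)) 1 := hP.faceCount_one.symm
    _ ≤ fmax (2 * k + 2) n 1 := hcard ▸ hP.faceCount_one_le_fmax (by lia) hspan

theorem exists_forall_mul_choose_two_le_mul_div (k : ℕ) {ε : ℝ} (hε : 0 < ε) :
    ∃ N : ℕ, ∀ n ≥ N, (2 * k / (2 * k + 1) - ε) * (n.choose 2 : ℝ) ≤
      (n * (k * n / (2 * k + 1)) : ℕ) := by
  obtain ⟨N, hN⟩ := exists_nat_gt (1 + 2 / ε)
  refine ⟨N, fun n hn => ?_⟩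
  set c : ℝ := k / (2 * k + 1)
  have hfloor : c * n - 1 ≤ (k * n / (2 * k + 1) : ℕ) := by
    have h := (Nat.lt_floor_add_one (((k * n : ℕ) : ℝ) / (2 * k + 1 : ℕ))).le
    rw [Nat.floor_div_eq_div] at h
    push_cast at h ⊢
    rw [sub_le_iff_le_add, div_mul_eq_mul_div]
    exact h
  have hεn : 2 ≤ ε * (n - 1) := by
    have h : 1 + 2 / ε ≤ n := hN.le.trans (mod_cast hn)
    rw [← le_sub_iff_add_le', div_le_iff₀' hε] at h
    exact h
  have hc : 0 ≤ c := by positivity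
  calc (2 * k / (2 * k + 1) - ε) * (n.choose 2 : ℝ) = n * (c * n - c - ε * (n - 1) / 2) := by
        rw [Nat.cast_choose_two]
        ring
    _ ≤ n * (c * n - 1) := mul_le_mul_of_nonneg_left (by linarith) n.cast_nonneg
    _ ≤ n * (k * n / (2 * k + 1) : ℕ) := by gcongr
    _ = (n * (k * n / (2 * k + 1)) : ℕ) := by push_cast; rfl

end LowerBound

theorem stmt_2_general (d : ℕ) (hd : 2 ≤ d) :
    (Even d → ∀ ε : ℝ, 0 < ε → ∃ N : ℕ, ∀ n : ℕ, N ≤ n → Even n →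
      (((d : ℝ) - 2) / ((d : ℝ) - 1) - ε) * (n.choose 2 : ℝ) ≤ (fmax d n 1 : ℝ)) ∧
    (∀ n : ℕ, Even n →
      (fmax d n 1 : ℝ) ≤ (1 - (2 : ℝ) ^ (-(d : ℤ))) * (n : ℝ) ^ 2 / 2) := by
  refine ⟨fun heven ε hε => ?_, fun n _ => cast_fmax_one_le hd n⟩
  obtain ⟨k, rfl⟩ : ∃ k, d = 2 * k + 2 := by
    obtain ⟨m, rfl⟩ := heven
    exact ⟨m - 1, by lia⟩
  obtain ⟨N, hN⟩ := exists_forall_mul_choose_two_le_mul_div k hε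
  refine ⟨max N (2 * (2 * k + 1) + 1), fun n hn hne => ?_⟩
  have hdensity : (((2 * k + 2 : ℕ) : ℝ) - 2) / (((2 * k + 2 : ℕ) : ℝ) - 1) =
      2 * k / (2 * k + 1) := by
    push_cast
    congr 1 <;> ring
  rw [hdensity]
  exact (hN n (le_of_max_le_left hn)).trans
    (mod_cast mul_div_le_fmax_one hne (Nat.lt_of_succ_le (le_of_max_le_right hn)))

/-- Theorem 1.3: bounds on the maximal number of edges of a cs `d`-polytope. -/
theorem stmt_2 (d : ℕ) (hd : Even d) (hd4 : 4 ≤ d) :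
    (∀ ε : ℝ, 0 < ε → ∃ N : ℕ, ∀ n : ℕ, N ≤ n → Even n →
      (((d : ℝ) - 2) / ((d : ℝ) - 1) - ε) * (n.choose 2 : ℝ) ≤ (fmax d n 1 : ℝ)) ∧
    (∀ n : ℕ, Even n →
      (fmax d n 1 : ℝ) ≤ (1 - (2 : ℝ) ^ (-(d : ℤ))) * (n : ℝ) ^ 2 / 2) :=
  (stmt_2_general d (by lia)).imp_left (· hd)
end

section
/- Let P ⊂ ℝ^d be a centrally symmetric d-dimensional polytope with n vertices, and let j be an integer with 1 ≤ j ≤ (d−2)/2. Then f_j(P) ≤ (n/(n−1))·(1 − 2^{−d})·C(n,j+1). -/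
open Real

/-! Let `S` be the vertex set of `P`. The translates `u + int P`, `u ∈ S`, have equal volume and lie
in `2 int P`, so by Cauchy–Schwarz at least `|S|² / 2^d` ordered pairs `(u, v)` have overlapping
translates; for these, `(u - v) / 2` lies in `int P` by symmetry. As `S = -S`, at most
`(1 - 2^{-d}) |S|²` pairs have their midpoint outside `int P`. A proper `j`-face is determined by
`j + 1` affinely independent vertices spanning it, and all midpoints of those avoid `int P`; double
counting the pairs inside such `(j + 1)`-sets finishes the proof.
-/

open MeasureTheory Module Finset Filter
open scoped Pointwise Topology

section SecondMoment

variable {α ι : Type*} [MeasurableSpace α] {μ : Measure α} {B : Set α}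

theorem sq_setIntegral_le_measureReal_mul {f : α → ℝ} (hB : μ B ≠ ⊤) (hf : IntegrableOn f B μ)
    (hf_sq : IntegrableOn (fun x => f x ^ 2) B μ) :
    (∫ x in B, f x ∂μ) ^ 2 ≤ μ.real B * ∫ x in B, f x ^ 2 ∂μ := by
  rcases eq_or_ne (μ B) 0 with hB₀ | hB₀
  · simp [setIntegral_measure_zero _ hB₀]
  have hpos : 0 < μ.real B := ENNReal.toReal_pos hB₀ hB
  have jensen : (⨍ x in B, f x ∂μ) ^ 2 ≤ ⨍ x in B, f x ^ 2 ∂μ :=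
    even_two.convexOn_pow.map_set_average_le (continuous_pow 2).continuousOn isClosed_univ hB₀ hB
      (ae_of_all _ fun _ => Set.mem_univ _) hf hf_sq
  rw [setAverage_eq, setAverage_eq, smul_eq_mul, smul_eq_mul, mul_pow, inv_pow,
    inv_mul_le_iff₀ (by positivity)] at jensen
  calc (∫ x in B, f x ∂μ) ^ 2
      ≤ μ.real B ^ 2 * ((μ.real B)⁻¹ * ∫ x in B, f x ^ 2 ∂μ) := jensen
    _ = μ.real B * ∫ x in B, f x ^ 2 ∂μ := by field_simp

theorem sq_sum_measureReal_le {s : Finset ι} {T : ι → Set α} (hB : μ B ≠ ⊤)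
    (hT : ∀ i ∈ s, MeasurableSet (T i)) (hTB : ∀ i ∈ s, T i ⊆ B) :
    (∑ i ∈ s, μ.real (T i)) ^ 2 ≤ μ.real B * ∑ i ∈ s, ∑ j ∈ s, μ.real (T i ∩ T j) := by
  have : Fact (μ B < ⊤) := ⟨hB.lt_top⟩
  have integrable_one {A : Set α} (hA : MeasurableSet A) :
      IntegrableOn (A.indicator (1 : α → ℝ)) B μ :=
    (integrable_indicator_iff hA).2 (integrableOn_const (measure_ne_top _ _))
  have integral_one {A : Set α} (hA : MeasurableSet A) (hAB : A ⊆ B) :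
      ∫ x in B, A.indicator (1 : α → ℝ) x ∂μ = μ.real A := by
    rw [integral_indicator_one hA, measureReal_restrict_apply hA, Set.inter_eq_left.2 hAB]
  have sq_eq (x : α) : (∑ i ∈ s, (T i).indicator (1 : α → ℝ) x) ^ 2 =
      ∑ i ∈ s, ∑ j ∈ s, (T i ∩ T j).indicator (1 : α → ℝ) x := by
    simp only [sq, sum_mul_sum, Set.inter_indicator_one, Pi.mul_apply]
  have integrable_inter : ∀ i ∈ s, ∀ j ∈ s,
      IntegrableOn ((T i ∩ T j).indicator (1 : α → ℝ)) B μ :=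
    fun i hi j hj => integrable_one ((hT i hi).inter (hT j hj))
  have cauchy_schwarz := sq_setIntegral_le_measureReal_mul hB
    (integrable_finsetSum s fun i hi => integrable_one (hT i hi))
    (by simpa only [IntegrableOn, sq_eq] using integrable_finsetSum s fun i hi =>
      integrable_finsetSum s fun j hj => integrable_inter i hi j hj)
  simp only [sq_eq] at cauchy_schwarz
  rwa [integral_finsetSum _ fun i hi => integrable_one (hT i hi),
    integral_finsetSum _ fun i hi => integrable_finsetSum s fun j hj => integrable_inter i hi j hj,
    sum_congr rfl fun i hi => integral_one (hT i hi) (hTB i hi),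
    sum_congr rfl fun i hi => (integral_finsetSum _ fun j hj => integrable_inter i hi j hj).trans <|
      sum_congr rfl fun j hj => integral_one ((hT i hi).inter (hT j hj))
        (Set.inter_subset_left.trans (hTB i hi))] at cauchy_schwarz

open scoped Classical in
theorem card_sq_mul_le_card_inter_nonempty {s : Finset ι} {T : ι → Set α} {m : ℝ} (hm : 0 < m)
    (hB : μ B ≠ ⊤) (hT : ∀ i ∈ s, MeasurableSet (T i)) (hTB : ∀ i ∈ s, T i ⊆ B)
    (hTm : ∀ i ∈ s, μ.real (T i) = m) :
    (#s : ℝ) ^ 2 * m ≤ μ.real B * #{p ∈ s ×ˢ s | (T p.1 ∩ T p.2).Nonempty} := by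
  have overlap_le : ∑ i ∈ s, ∑ j ∈ s, μ.real (T i ∩ T j) ≤
      #{p ∈ s ×ˢ s | (T p.1 ∩ T p.2).Nonempty} * m := by
    rw [← sum_product', ← nsmul_eq_mul, ← sum_const, sum_filter]
    refine sum_le_sum fun p hp => ?_
    obtain ⟨hp₁, -⟩ := mem_product.1 hp
    split_ifs with h
    · exact (measureReal_mono Set.inter_subset_left
        (measure_ne_top_of_subset (hTB _ hp₁) hB)).trans_eq (hTm _ hp₁)
    · simp [Set.not_nonempty_iff_eq_empty.1 h]
  have second_moment := sq_sum_measureReal_le hB hT hTB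
  rw [sum_congr rfl hTm, sum_const, nsmul_eq_mul] at second_moment
  refine le_of_mul_le_mul_right ?_ hm
  calc (#s : ℝ) ^ 2 * m * m = (#s * m) ^ 2 := by ring
    _ ≤ μ.real B * (#{p ∈ s ×ˢ s | (T p.1 ∩ T p.2).Nonempty} * m) :=
      second_moment.trans (mul_le_mul_of_nonneg_left overlap_le measureReal_nonneg)
    _ = _ := by ring

end SecondMoment

section CentralSymmetry

variable {E : Type*} [AddCommGroup E] [Module ℝ E] {P : Set E}

theorem neg_mem_extremePoints_of_eq_neg (hsymm : P = -P) {u : E}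
    (hu : u ∈ P.extremePoints ℝ) : -u ∈ P.extremePoints ℝ := by
  have image_neg : LinearEquiv.neg ℝ '' P = P := by
    conv_rhs => rw [hsymm, ← Set.image_neg_eq_neg]
    rfl
  rw [← image_neg, ← image_extremePoints]
  exact Set.mem_image_of_mem _ hu

theorem midpoint_mem_interior_of_add_mem [TopologicalSpace E] [IsTopologicalAddGroup E]
    [ContinuousConstSMul ℝ E] (hPc : Convex ℝ P) (hsymm : P = -P)
    {u v : E} (h : u + v ∈ interior P - interior P) : midpoint ℝ u v ∈ interior P := by
  obtain ⟨x, hx, y, hy, hxy : x - y = u + v⟩ := h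
  have hy' : -y ∈ P := by rw [hsymm]; simpa using interior_subset hy
  rw [midpoint_eq_smul_add, ← hxy, sub_eq_add_neg, smul_add]
  exact hPc.combo_interior_self_mem_interior hx hy' (by norm_num) (by norm_num) (by norm_num)

end CentralSymmetry

section Midpoints

variable {E : Type*} [NormedAddCommGroup E] [NormedSpace ℝ E] [FiniteDimensional ℝ E]
  {P : Set E} {S : Finset E}

open scoped Classical in
theorem card_sq_le_card_sub_mem_interior_sub_interior (hPc : Convex ℝ P)
    (hPb : Bornology.IsBounded P) (hne : (interior P).Nonempty) (hSP : (S : Set E) ⊆ P) :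
    #S ^ 2 ≤ 2 ^ finrank ℝ E * #{p ∈ S ×ˢ S | p.1 - p.2 ∈ interior P - interior P} := by
  borelize E
  let μ : Measure E := Measure.addHaar
  have hfin : μ (interior P) ≠ ⊤ := (hPb.subset interior_subset).measure_lt_top.ne
  have hpos : 0 < μ.real (interior P) :=
    ENNReal.toReal_pos (isOpen_interior.measure_pos μ hne).ne' hfin
  have translate_subset : ∀ u ∈ S, u +ᵥ interior P ⊆ (2 : ℝ) • interior P := by
    rintro u hu _ ⟨x, hx, rfl⟩
    refine ⟨(2⁻¹ : ℝ) • u + (2⁻¹ : ℝ) • x, ?_, ?_⟩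
    · exact hPc.combo_self_interior_mem_interior (hSP hu) hx
        (by norm_num) (by norm_num) (by norm_num)
    · simp [smul_smul]
  have overlap := card_sq_mul_le_card_inter_nonempty (μ := μ) hpos
    (by rw [Measure.addHaar_smul]; exact ENNReal.mul_ne_top ENNReal.ofReal_ne_top hfin)
    (fun u _ => (isOpen_interior.vadd u).measurableSet) translate_subset
    (fun u _ => by rw [Measure.real, measure_vadd, Measure.real])
  have sub_mem (u v : E) (h : ((u +ᵥ interior P) ∩ (v +ᵥ interior P)).Nonempty) :
      u - v ∈ interior P - interior P := by
    obtain ⟨_, ⟨x, hx, rfl⟩, y, hy, hxy⟩ := h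
    refine ⟨y, hy, x, hx, ?_⟩
    simp only [vadd_eq_add] at hxy ⊢
    rw [sub_eq_sub_iff_add_eq_add, add_comm, hxy]
  have volume_two_smul :
      μ.real ((2 : ℝ) • interior P) = 2 ^ finrank ℝ E * μ.real (interior P) := by
    simp [Measure.real, Measure.addHaar_smul]
  rw [volume_two_smul, mul_right_comm] at overlap
  calc #S ^ 2 ≤ 2 ^ finrank ℝ E *
        #{p ∈ S ×ˢ S | ((p.1 +ᵥ interior P) ∩ (p.2 +ᵥ interior P)).Nonempty} := by
        exact_mod_cast le_of_mul_le_mul_right overlap hpos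
    _ ≤ _ := by
        gcongr with p
        exact sub_mem p.1 p.2

open scoped Classical in
theorem card_midpoint_notMem_interior_le (hPc : Convex ℝ P) (hPb : Bornology.IsBounded P)
    (hne : (interior P).Nonempty) (hsymm : P = -P) (hSP : (S : Set E) ⊆ P)
    (hS_neg : ∀ u ∈ S, -u ∈ S) :
    (#{p ∈ S ×ˢ S | midpoint ℝ p.1 p.2 ∉ interior P} : ℝ) ≤
      (1 - (2 ^ finrank ℝ E)⁻¹) * (#S : ℝ) ^ 2 := by
  have reflect : #{p ∈ S ×ˢ S | p.1 - p.2 ∈ interior P - interior P} ≤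
      #{p ∈ S ×ˢ S | midpoint ℝ p.1 p.2 ∈ interior P} := by
    refine card_le_card_of_injOn (fun p => (p.1, -p.2)) (fun p hp => ?_) ?_
    · simp only [coe_filter, mem_product, Set.mem_ofPred_eq] at hp ⊢
      exact ⟨⟨hp.1.1, hS_neg _ hp.1.2⟩,
        midpoint_mem_interior_of_add_mem hPc hsymm (by rw [← sub_eq_add_neg]; exact hp.2)⟩
    · exact fun p _ q _ h => by simpa [Prod.ext_iff] using h
  have complement := card_filter_add_card_filter_not (s := S ×ˢ S)
    (fun p => midpoint ℝ p.1 p.2 ∈ interior P)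
  have many : (#S : ℝ) ^ 2 ≤
      2 ^ finrank ℝ E * #{p ∈ S ×ˢ S | midpoint ℝ p.1 p.2 ∈ interior P} := by
    exact_mod_cast (card_sq_le_card_sub_mem_interior_sub_interior hPc hPb hne hSP).trans
      (Nat.mul_le_mul_left _ reflect)
  rw [← inv_mul_le_iff₀ (by positivity)] at many
  rw [card_product, ← sq] at complement
  have complement_real : (#{p ∈ S ×ˢ S | midpoint ℝ p.1 p.2 ∈ interior P} : ℝ) +
      #{p ∈ S ×ˢ S | midpoint ℝ p.1 p.2 ∉ interior P} = (#S : ℝ) ^ 2 := by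
    exact_mod_cast complement
  linarith

end Midpoints

section Cliques

variable {α : Type*} (S : Finset α) (r : α → α → Prop) (k : ℕ)

open scoped Classical in
/-- The `k`-element subsets of `S` whose distinct elements are pairwise related by `r`: the
`k`-cliques on the vertex set `S`, where `r` need not be symmetric. -/
noncomputable def cliquesOfCard : Finset (Finset α) :=
  (S.powersetCard k).filter fun T : Finset α => (T : Set α).Pairwise r

variable {S r k}

theorem mem_cliquesOfCard {T : Finset α} :
    T ∈ cliquesOfCard S r k ↔ (T ⊆ S ∧ #T = k) ∧ (T : Set α).Pairwise r := by
  simp only [cliquesOfCard, mem_filter, mem_powersetCard]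

open scoped Classical in
theorem card_cliquesOfCard_mul_le (hk : 2 ≤ k) :
    #(cliquesOfCard S r k) * (k * (k - 1)) ≤
      #{p ∈ S.offDiag | r p.1 p.2} * (#S - 2).choose (k - 2) := by
  refine card_mul_le_card_mul (fun T p => p ∈ T.offDiag) (fun T hT => ?_) fun p hp => ?_
  · obtain ⟨⟨hTS, hTk⟩, hr⟩ := mem_cliquesOfCard.1 hT
    have offDiag_subset : T.offDiag ⊆
        bipartiteAbove (fun T p => p ∈ T.offDiag) {p ∈ S.offDiag | r p.1 p.2} T := by
      intro p hp
      obtain ⟨h₁, h₂, hne⟩ := mem_offDiag.1 hp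
      exact mem_filter.2 ⟨mem_filter.2 ⟨offDiag_mono hTS hp, hr h₁ h₂ hne⟩, hp⟩
    calc k * (k - 1) = #T.offDiag := by rw [offDiag_card, hTk, Nat.mul_sub_one]
      _ ≤ _ := card_le_card offDiag_subset
  · obtain ⟨h₁, h₂, hne⟩ := mem_offDiag.1 (mem_filter.1 hp).1
    have below_subset : bipartiteBelow (fun T p => p ∈ T.offDiag)
        (cliquesOfCard S r k) p ⊆ {T ∈ S.powersetCard k | {p.1, p.2} ⊆ T} := by
      intro T hT
      obtain ⟨hT, hpT⟩ := mem_filter.1 hT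
      obtain ⟨h₁T, h₂T, -⟩ := mem_offDiag.1 hpT
      exact mem_filter.2
        ⟨mem_powersetCard.2 (mem_cliquesOfCard.1 hT).1, by simp [insert_subset_iff, h₁T, h₂T]⟩
    calc _ ≤ #{T ∈ S.powersetCard k | {p.1, p.2} ⊆ T} := card_le_card below_subset
      _ = (#S - 2).choose (k - 2) := by
        rw [card_filter_powersetCard_subset _ _ _ (by simp [insert_subset_iff, h₁, h₂])
          (by rwa [card_pair hne]), card_pair hne]

theorem choose_mul_mul_pred_eq {n k : ℕ} (hk : 2 ≤ k) :
    n.choose k * (k * (k - 1)) = n * (n - 1) * (n - 2).choose (k - 2) := by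
  have mul_pred_eq (m : ℕ) : m * (m - 1) = m.choose 2 * 2 := by
    rw [Nat.choose_two_right, Nat.div_mul_cancel m.even_mul_pred_self.two_dvd]
  rw [mul_pred_eq, mul_pred_eq, ← mul_assoc, Nat.choose_mul hk, mul_right_comm]

open scoped Classical in
theorem card_cliquesOfCard_le {δ : ℝ} (hk : 2 ≤ k)
    (hδ : (#{p ∈ S.offDiag | r p.1 p.2} : ℝ) ≤ δ * (#S : ℝ) ^ 2) :
    (#(cliquesOfCard S r k) : ℝ) ≤ (#S : ℝ) / (#S - 1) * δ * (#S).choose k := by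
  rcases lt_or_ge #S k with hSk | hkS
  · simp [cliquesOfCard, powersetCard_eq_empty.2 hSk, Nat.choose_eq_zero_of_lt hSk]
  have hS : (0 : ℝ) < #S - 1 := by rw [sub_pos]; exact_mod_cast hk.trans hkS
  have hk₀ : (0 : ℝ) < k * (k - 1) := by
    have : (2 : ℝ) ≤ k := by exact_mod_cast hk
    nlinarith
  have count : (#(cliquesOfCard S r k) : ℝ) * (k * (k - 1)) ≤
      #{p ∈ S.offDiag | r p.1 p.2} * (#S - 2).choose (k - 2) := by
    have := card_cliquesOfCard_mul_le (S := S) (r := r) hk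
    rw [← @Nat.cast_le ℝ] at this
    push_cast [Nat.cast_sub (one_le_two.trans hk)] at this
    exact this
  have choose_eq : ((#S).choose k : ℝ) * (k * (k - 1)) =
      #S * (#S - 1) * (#S - 2).choose (k - 2) := by
    have := congrArg (Nat.cast (R := ℝ)) (choose_mul_mul_pred_eq (n := #S) hk)
    push_cast [Nat.cast_sub (one_le_two.trans hk), Nat.cast_sub (one_le_two.trans (hk.trans hkS))]
      at this
    exact this
  refine le_of_mul_le_mul_right ?_ hk₀
  calc _ ≤ δ * (#S : ℝ) ^ 2 * (#S - 2).choose (k - 2) := count.trans (by gcongr)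
    _ = (#S : ℝ) / (#S - 1) * δ * (#S * (#S - 1) * (#S - 2).choose (k - 2)) := by
      field_simp
    _ = (#S : ℝ) / (#S - 1) * δ * (#S).choose k * (k * (k - 1)) := by rw [← choose_eq]; ring

end Cliques

section Faces

variable {E : Type*} [AddCommGroup E] [Module ℝ E] [TopologicalSpace E] {P F : Set E} {j : ℕ}

/-- The `j`-dimensional faces of `P`, encoded as its nonempty exposed subsets whose direction has
dimension `j`; `P` itself counts as a face. For subsets of `EuclideanSpace ℝ (Fin d)` their number
is `faceCount P j`. -/
def facesOfDim (P : Set E) (j : ℕ) : Set (Set E) :=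
  {F | IsExposed ℝ P F ∧ F.Nonempty ∧ finrank ℝ (vectorSpan ℝ F) = j}

theorem inter_affineSpan_eq_of_isExposed (hF : IsExposed ℝ P F) :
    P ∩ (affineSpan ℝ F : Set E) = F := by
  rcases F.eq_empty_or_nonempty with rfl | hne
  · simp
  refine Set.Subset.antisymm ?_ fun x hx => ⟨hF.subset hx, subset_affineSpan ℝ F hx⟩
  obtain ⟨l, rfl⟩ := hF hne
  obtain ⟨x₀, hx₀⟩ := hne
  rintro x ⟨hxP, hx⟩
  have l_eq : l x = l x₀ := by
    refine affineSpan_induction (p := fun x => l x = l x₀) hx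
      (fun y hy => le_antisymm (hx₀.2 y hy.1) (hy.2 x₀ hx₀.1)) fun c u v w hu hv hw => ?_
    simp [hu, hv, hw]
  exact ⟨hxP, fun y hy => (hx₀.2 y hy).trans_eq l_eq.symm⟩

theorem disjoint_interior_of_isExtreme [IsTopologicalAddGroup E] [ContinuousSMul ℝ E]
    (hF : IsExtreme ℝ P F) (hne : F ≠ P) : Disjoint F (interior P) := by
  refine Set.disjoint_left.2 fun x hxF hxP => hne (hF.subset.antisymm fun y hy => ?_)
  have tendsto_x : Tendsto (fun t : ℝ => x + t • (x - y)) (𝓝[>] 0) (𝓝 x) :=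
    (Continuous.tendsto' (by fun_prop) 0 x (by simp)).mono_left nhdsWithin_le_nhds
  obtain ⟨t, ht_mem, ht : 0 < t⟩ :=
    ((tendsto_x.eventually (mem_interior_iff_mem_nhds.1 hxP)).and self_mem_nhdsWithin).exists
  refine hF.left_mem_of_mem_openSegment hy ht_mem hxF
    ⟨t / (1 + t), 1 / (1 + t), by positivity, by positivity, by field_simp; ring, ?_⟩
  match_scalars <;> field_simp; ring

theorem exists_finset_subset_extremePoints_affineSpan_eq [IsTopologicalAddGroup E]
    [ContinuousSMul ℝ E] [T2Space E] [LocallyConvexSpace ℝ E] (hFk : IsCompact F)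
    (hFc : Convex ℝ F) (hfin : (F.extremePoints ℝ).Finite) (hne : F.Nonempty) :
    ∃ T : Finset E, (T : Set E) ⊆ F.extremePoints ℝ ∧
      #T = finrank ℝ (vectorSpan ℝ F) + 1 ∧ affineSpan ℝ (T : Set E) = affineSpan ℝ F := by
  have krein_milman : convexHull ℝ (F.extremePoints ℝ) = F := by
    rw [← (hfin.isClosed_convexHull ℝ).closure_eq, closure_convexHull_extremePoints hFk hFc]
  obtain ⟨t, ht, hspan, hind⟩ := exists_affineIndependent ℝ E (F.extremePoints ℝ)
  obtain ⟨T, rfl⟩ := (hfin.subset ht).exists_finset_coe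
  rw [← affineSpan_convexHull (F.extremePoints ℝ), krein_milman] at hspan
  have : Nonempty (T : Set E) := by
    rw [Set.nonempty_coe_sort, ← affineSpan_nonempty ℝ, hspan, affineSpan_nonempty]
    exact hne
  refine ⟨T, ht, ?_, hspan⟩
  have card_eq := hind.finrank_vectorSpan_add_one
  rw [Subtype.range_coe, ← direction_affineSpan, hspan, direction_affineSpan] at card_eq
  simpa using card_eq.symm

theorem ncard_facesOfDim_le_card_cliquesOfCard [IsTopologicalAddGroup E] [ContinuousSMul ℝ E]
    [T2Space E] [LocallyConvexSpace ℝ E] (hPk : IsCompact P) (hPc : Convex ℝ P)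
    (hfin : (P.extremePoints ℝ).Finite) (hj : j < finrank ℝ (vectorSpan ℝ P)) :
    (facesOfDim P j).ncard ≤
      #(cliquesOfCard hfin.toFinset (fun u v => midpoint ℝ u v ∉ interior P) (j + 1)) := by
  have exists_simplex : ∀ F ∈ facesOfDim P j, ∃ T : Finset E, (T : Set E) ⊆ F.extremePoints ℝ ∧
      #T = j + 1 ∧ affineSpan ℝ (T : Set E) = affineSpan ℝ F := by
    rintro F ⟨hF, hne, rfl⟩
    exact exists_finset_subset_extremePoints_affineSpan_eq (hF.isCompact hPk) (hF.convex hPc)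
      (hfin.subset hF.isExtreme.extremePoints_subset_extremePoints) hne
  choose! simplex hvert hcard hspan using exists_simplex
  rw [← Set.ncard_coe_finset]
  refine Set.ncard_le_ncard_of_injOn simplex (fun F hF => ?_) (fun F hF G hG hFG => ?_)
    (finite_toSet _)
  · have vertices_subset : simplex F ⊆ hfin.toFinset := fun x hx => hfin.mem_toFinset.2 <|
      hF.1.isExtreme.extremePoints_subset_extremePoints (hvert F hF hx)
    have hproper : F ≠ P := fun h => hj.ne' (h ▸ hF.2.2)
    refine mem_coe.2 <| mem_cliquesOfCard.2 ⟨⟨vertices_subset, hcard F hF⟩, ?_⟩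
    intro u hu v hv _
    exact (disjoint_interior_of_isExtreme hF.1.isExtreme hproper).notMem_of_mem_left <|
      (hF.1.convex hPc).midpoint_mem (hvert F hF hu).1 (hvert F hF hv).1
  · rw [← inter_affineSpan_eq_of_isExposed hF.1, ← inter_affineSpan_eq_of_isExposed hG.1,
      ← hspan F hF, ← hspan G hG, hFG]

end Faces

theorem stmt_5_general {E : Type*} [NormedAddCommGroup E] [NormedSpace ℝ E]
    [FiniteDimensional ℝ E] {P : Set E} {j : ℕ}
    (hP : ∃ V : Finset E, P = convexHull ℝ (V : Set E)) (hsymm : P = -P)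
    (hdim : affineSpan ℝ P = ⊤) (hj : 1 ≤ j) (hjd : j < finrank ℝ E) :
    ((facesOfDim P j).ncard : ℝ) ≤
      ((P.extremePoints ℝ).ncard : ℝ) / ((P.extremePoints ℝ).ncard - 1) *
        (1 - (2 ^ finrank ℝ E)⁻¹) * ((P.extremePoints ℝ).ncard.choose (j + 1) : ℝ) := by
  classical
  obtain ⟨V, hV⟩ := hP
  have hPc : Convex ℝ P := hV ▸ convex_convexHull ℝ _
  have hPk : IsCompact P := hV ▸ V.finite_toSet.isCompact_convexHull ℝ
  have hfin : (P.extremePoints ℝ).Finite :=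
    V.finite_toSet.subset (hV ▸ extremePoints_convexHull_subset)
  rw [Set.ncard_eq_toFinset_card _ hfin]
  have pairs_le := card_midpoint_notMem_interior_le hPc hPk.isBounded
    (hPc.interior_nonempty_iff_affineSpan_eq_top.2 hdim) hsymm (S := hfin.toFinset)
    (by simpa using extremePoints_subset)
    (by simpa using fun u => neg_mem_extremePoints_of_eq_neg hsymm)
  have faces_le := ncard_facesOfDim_le_card_cliquesOfCard (j := j) hPk hPc hfin
    (by rwa [← direction_affineSpan, hdim, AffineSubspace.direction_top, finrank_top])
  refine (Nat.cast_le.2 faces_le).trans <| card_cliquesOfCard_le (by lia) <|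
    (Nat.cast_le.2 <| card_le_card fun p hp => ?_).trans pairs_le
  simp only [mem_filter, mem_offDiag, mem_product] at hp ⊢
  exact ⟨⟨hp.1.1, hp.1.2.1⟩, hp.2⟩

/-- Proposition 2.2: a cs `d`-polytope with `n` vertices has at most
`(n/(n-1))(1 - 2^{-d}) C(n, j+1)` faces of dimension `j`, for `1 ≤ j ≤ (d-2)/2`. -/
theorem stmt_5 (d n j : ℕ) (P : Set (EuclideanSpace ℝ (Fin d)))
    (hP : IsCSPolytope P) (hdim : affineSpan ℝ P = ⊤)
    (hn : (Set.extremePoints ℝ P).ncard = n)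
    (hj1 : 1 ≤ j) (hjd : 2 * j + 2 ≤ d) :
    (faceCount P j : ℝ) ≤
      ((n : ℝ) / ((n : ℝ) - 1)) * (1 - (2 : ℝ) ^ (-(d : ℤ))) * (n.choose (j + 1) : ℝ) := by
  subst hn
  simpa [faceCount, facesOfDim] using stmt_5_general hP.1 hP.2 hdim hj1 (by simp; lia)
end

section
/- Let k be a positive integer and let M be a multiset of nonzero complex numbers with |M| = 4k−2. Then M is the multiset of roots (with multiplicity) of a raked self-inversive polynomial of degree 4k−2 if and only if (i) the multiset of complex conjugates of M equals the multiset of inverses of M, i.e. ζ ∈ M with multiplicity m if and only if 1/conj(ζ) ∈ M with multiplicity m, and (ii) the odd power sums Σ_{ζ ∈ M} ζ^{2j−1} = 0 for all j = 1, …, k−1. -/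
open Polynomial

/-- A raked self-inversive polynomial of degree `4k-2`: a complex polynomial of degree
exactly `4k-2` all of whose odd-degree coefficients vanish except possibly the middle
one (degree `2k-1`), and which satisfies `D(z) = z^{4k-2} · conj(D(1/conj z))`. -/
def RakedSelfInversive (k : ℕ) (D : Polynomial ℂ) : Prop :=
  D.natDegree = 4 * k - 2 ∧ D ≠ 0 ∧
  (∀ i : ℕ, Odd i → i ≠ 2 * k - 1 → D.coeff i = 0) ∧
  (∀ z : ℂ, z ≠ 0 →
    D.eval z = z ^ (4 * k - 2) * (starRingEnd ℂ) (D.eval (((starRingEnd ℂ) z)⁻¹)))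

/-!
The involution `p ↦ p*`, `p*(z) = z ^ N * conj (p (1 / conj z))`, carries a split polynomial with
nonzero roots `ζ` to one with roots `1 / conj ζ`, so the root multiset of a self-inversive
polynomial is invariant under `ζ ↦ 1 / conj ζ`. Conversely, if `M` is invariant and
`P = ∏ (X - ζ)`, then `P* = u * P` for a scalar `u`, and averaging a multiple of `P` with its image
makes it self-inversive.

Self-inversiveness in degree `2 * m` pairs the coefficients of degrees `i` and `2 * m - i`, which
have the same parity, so the vanishing of the odd coefficients off the middle is the vanishing of
the elementary symmetric functions `e_i` for odd `i < m`. In Newton's identity for odd `i`, every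
product of some `e_a` and power sum `p_b` with `a + b = i` has exactly one odd index, so
inductively `i * e_i = p_i`.
-/

section Newton

variable {R : Type*} [CommRing R]

theorem multiset_mul_esymm_eq_sum (M : Multiset R) (n : ℕ) :
    n * M.esymm n = (-1) ^ (n + 1) *
      ∑ a ∈ Finset.HasAntidiagonal.antidiagonal n with a.1 < n,
        (-1) ^ a.1 * M.esymm a.1 * (M.map (· ^ a.2)).sum := by
  classical
  have hpsum (j : ℕ) :
      ∑ x : M, (x : R) ^ j = (M.map (· ^ j)).sum := by
    conv_rhs => rw [← M.map_univ_coe, Multiset.map_map]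
    rfl
  have newton := congrArg (MvPolynomial.aeval fun x : M ↦ (x : R))
    (MvPolynomial.mul_esymm_eq_sum M R n)
  simpa only [map_mul, map_natCast, map_pow, map_neg, map_one, map_sum, MvPolynomial.psum,
    MvPolynomial.aeval_X, MvPolynomial.aeval_esymm_eq_multiset_esymm, M.map_univ_coe,
    hpsum] using newton

theorem natCast_mul_esymm_eq_psum_of_odd {M : Multiset R} {n : ℕ} (hn : Odd n)
    (hpsum : ∀ i < n, Odd i → (M.map (· ^ i)).sum = 0)
    (hesymm : ∀ i < n, Odd i → M.esymm i = 0) :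
    n * M.esymm n = (M.map (· ^ n)).sum := by
  rw [multiset_mul_esymm_eq_sum, Finset.sum_eq_single (0, n), hn.add_one.neg_one_pow]
  · simp [Multiset.esymm]
  · rintro ⟨a, b⟩ hab hne
    obtain ⟨rfl, hlt⟩ : a + b = n ∧ a < n := by simpa using hab
    rcases Nat.even_or_odd a with ha | ha
    · have ha0 : a ≠ 0 := by rintro rfl; simp at hne
      have hb : Odd b := (Nat.odd_add'.mp hn).mpr ha
      rw [hpsum b (by omega) hb, mul_zero]
    · rw [hesymm a hlt ha, mul_zero, zero_mul]
  · simp [hn.pos]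

theorem odd_psum_eq_zero_iff_odd_esymm_eq_zero [NoZeroDivisors R] [CharZero R]
    (M : Multiset R) (m : ℕ) :
    (∀ i < m, Odd i → (M.map (· ^ i)).sum = 0) ↔ ∀ i < m, Odd i → M.esymm i = 0 := by
  induction m with
  | zero => simp
  | succ m ih =>
    rw [Nat.forall_lt_succ_right, Nat.forall_lt_succ_right, ← ih]
    refine and_congr_right fun hpsum ↦ forall_congr' fun hm ↦ ?_
    rw [← natCast_mul_esymm_eq_psum_of_odd hm hpsum (ih.mp hpsum), mul_eq_zero,
      or_iff_right (Nat.cast_ne_zero.mpr hm.pos.ne')]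

end Newton

theorem coeff_natDegree_sub_eq_zero_iff_esymm_roots {R : Type*} [CommRing R] [IsDomain R]
    {p : R[X]} (hp0 : p ≠ 0) (hp : p.roots.card = p.natDegree) {i : ℕ} (hi : i ≤ p.natDegree) :
    p.coeff (p.natDegree - i) = 0 ↔ p.roots.esymm i = 0 := by
  simp [coeff_eq_esymm_roots_of_card hp (Nat.sub_le _ i), Nat.sub_sub_self hi, hp0]

section SelfInversive

open scoped ComplexConjugate

variable {K : Type*} [Field K] [StarRing K]

/-- The conjugate reciprocal `z ^ N * conj (p (1 / conj z))` of a polynomial of degree at most `N`,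
given on coefficients so that it makes sense over any field with an involution. As for
`Polynomial.reflect`, terms of degree above `N` stay in place. -/
noncomputable def conjReflect (N : ℕ) (p : K[X]) : K[X] :=
  reflect N (p.map (starRingEnd K))

/-- Self-inversive polynomials of degree exactly `N`: those equal to their conjugate reciprocal.
Using `degree` instead of `natDegree` excludes the zero polynomial also for `N = 0`. -/
structure IsSelfInversive (N : ℕ) (p : K[X]) : Prop where
  degree_eq : p.degree = N
  conjReflect_eq : conjReflect N p = p

theorem coeff_conjReflect (N : ℕ) (p : K[X]) (i : ℕ) :
    (conjReflect N p).coeff i = conj (p.coeff (revAt N i)) := by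
  rw [conjReflect, coeff_reflect, coeff_map]

theorem conjReflect_conjReflect (N : ℕ) (p : K[X]) : conjReflect N (conjReflect N p) = p := by
  ext i
  simp only [coeff_conjReflect, revAt_invol, starRingEnd_self_apply]

theorem conjReflect_add (N : ℕ) (p q : K[X]) :
    conjReflect N (p + q) = conjReflect N p + conjReflect N q := by
  simp only [conjReflect, Polynomial.map_add, reflect_add]

theorem conjReflect_C_mul (N : ℕ) (c : K) (p : K[X]) :
    conjReflect N (C c * p) = C (conj c) * conjReflect N p := by
  simp only [conjReflect, Polynomial.map_mul, map_C, reflect_C_mul]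

theorem conjReflect_mul {p q : K[X]} {m n : ℕ} (hp : p.natDegree ≤ m) (hq : q.natDegree ≤ n) :
    conjReflect (m + n) (p * q) = conjReflect m p * conjReflect n q := by
  rw [conjReflect, Polynomial.map_mul,
    reflect_mul _ _ (natDegree_map_le.trans hp) (natDegree_map_le.trans hq), conjReflect,
    conjReflect]

theorem eval_conjReflect {N : ℕ} {p : K[X]} (hp : p.natDegree ≤ N) {z : K} (hz : z ≠ 0) :
    (conjReflect N p).eval z = z ^ N * conj (p.eval (conj z)⁻¹) := by
  let : Invertible z⁻¹ := invertibleOfNonzero (inv_ne_zero hz)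
  have hreflect := eval₂_reflect_mul_pow (RingHom.id K) z⁻¹ N (p.map (starRingEnd K))
    (natDegree_map_le.trans hp)
  rw [invOf_eq_inv, inv_inv, inv_pow, ← eval, ← eval] at hreflect
  rw [conjReflect, ← eval_map_apply, map_inv₀, starRingEnd_self_apply, ← hreflect]
  field_simp

theorem conjReflect_eq_self_iff_eval [Infinite K] {N : ℕ} {p : K[X]} (hp : p.natDegree ≤ N) :
    conjReflect N p = p ↔ ∀ z ≠ 0, p.eval z = z ^ N * conj (p.eval (conj z)⁻¹) := by
  refine ⟨fun h z hz ↦ ?_, fun h ↦ ?_⟩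
  · rw [← eval_conjReflect hp hz, h]
  · refine eq_of_infinite_eval_eq _ _ ((Set.finite_singleton (0 : K)).infinite_compl.mono ?_)
    exact fun z hz ↦ (eval_conjReflect hp hz).trans (h z hz).symm

theorem conjReflect_X_sub_C {a : K} (ha : a ≠ 0) :
    conjReflect 1 (X - C a) = C (-conj a) * (X - C (conj a)⁻¹) := by
  have ha' : conj a ≠ 0 := (_root_.map_ne_zero _).mpr ha
  rw [conjReflect, Polynomial.map_sub, map_X, map_C, reflect_sub, reflect_one_X, reflect_C, mul_sub,
    ← C_mul, neg_mul, mul_inv_cancel₀ ha', C_neg, C_neg, C_1]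
  ring

theorem conjReflect_prod_X_sub_C {M : Multiset K} (h0 : 0 ∉ M) :
    conjReflect M.card (M.map fun a ↦ X - C a).prod =
      C (M.map fun a ↦ -conj a).prod *
        ((M.map fun a ↦ (conj a)⁻¹).map fun a ↦ X - C a).prod := by
  induction M using Multiset.induction_on with
  | empty => simp [conjReflect]
  | cons a M ih =>
    obtain ⟨ha, hM⟩ : a ≠ 0 ∧ 0 ∉ M := by simpa [eq_comm] using h0
    simp only [Multiset.map_cons, Multiset.prod_cons, Multiset.card_cons, add_comm M.card 1]
    rw [conjReflect_mul (natDegree_X_sub_C_le a)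
      (natDegree_multiset_prod_X_sub_C_eq_card M).le, conjReflect_X_sub_C ha, ih hM, C_mul]
    ring

theorem roots_conjReflect {p : K[X]} (hp : p.Splits) (h0 : 0 ∉ p.roots) :
    (conjReflect p.natDegree p).roots = p.roots.map fun a ↦ (conj a)⁻¹ := by
  rcases eq_or_ne p 0 with rfl | hp0
  · simp [conjReflect]
  have hscalar : conj p.leadingCoeff * (p.roots.map fun a ↦ -conj a).prod ≠ 0 := by
    refine mul_ne_zero ((_root_.map_ne_zero _).mpr (leadingCoeff_ne_zero.mpr hp0))
      (Multiset.prod_ne_zero fun h ↦ h0 ?_)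
    simpa using h
  calc (conjReflect p.natDegree p).roots
      = (conjReflect p.roots.card
          (C p.leadingCoeff * (p.roots.map fun a ↦ X - C a).prod)).roots := by
        rw [← hp.eq_prod_roots, hp.natDegree_eq_card_roots]
    _ = p.roots.map fun a ↦ (conj a)⁻¹ := by
        rw [conjReflect_C_mul, conjReflect_prod_X_sub_C h0, ← mul_assoc, ← C_mul,
          roots_C_mul _ hscalar, roots_multiset_prod_X_sub_C]

-- `q + conjReflect N q` is always fixed; take `q = x * p`, where `x = 1` works unless `u = -1`.
theorem exists_conjReflect_C_mul_eq_self (hK : ∃ x : K, conj x ≠ x) {N : ℕ} {p : K[X]} {u : K}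
    (hp : conjReflect N p = C u * p) :
    ∃ c ≠ 0, conjReflect N (C c * p) = C c * p := by
  obtain ⟨x, hx⟩ : ∃ x : K, x + conj x * u ≠ 0 := by
    by_contra! h
    obtain ⟨x, hx⟩ := hK
    have hu : u = -1 := by simpa [add_eq_zero_iff_eq_neg'] using h 1
    exact hx (by linear_combination -h x + conj x * hu)
  have haverage : C (x + conj x * u) * p = C x * p + conjReflect N (C x * p) := by
    rw [conjReflect_C_mul, hp, C_add, C_mul]
    ring
  refine ⟨x + conj x * u, hx, ?_⟩
  rw [haverage, conjReflect_add, conjReflect_conjReflect, add_comm]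

theorem IsSelfInversive.natDegree_eq {N : ℕ} {p : K[X]} (hp : IsSelfInversive N p) :
    p.natDegree = N :=
  natDegree_eq_of_degree_eq_some hp.degree_eq

theorem IsSelfInversive.ne_zero {N : ℕ} {p : K[X]} (hp : IsSelfInversive N p) : p ≠ 0 :=
  degree_ne_bot.mp (hp.degree_eq ▸ WithBot.natCast_ne_bot N)

theorem exists_isSelfInversive_roots_eq_iff (hK : ∃ x : K, conj x ≠ x) {M : Multiset K}
    (h0 : 0 ∉ M) :
    (∃ p, IsSelfInversive M.card p ∧ p.roots = M) ↔ (M.map fun a ↦ (conj a)⁻¹) = M := by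
  constructor
  · rintro ⟨p, hp, rfl⟩
    rw [← roots_conjReflect (splits_iff_card_roots.mpr hp.natDegree_eq.symm) h0, hp.natDegree_eq,
      hp.conjReflect_eq]
  · intro hM
    have hu := conjReflect_prod_X_sub_C h0
    rw [hM] at hu
    obtain ⟨c, hc, hself⟩ := exists_conjReflect_C_mul_eq_self hK hu
    refine ⟨_, ⟨?_, hself⟩, by rw [roots_C_mul _ hc, roots_multiset_prod_X_sub_C]⟩
    rw [degree_C_mul hc, degree_eq_natDegree (monic_multisetProd_X_sub_C M).ne_zero,
      natDegree_multiset_prod_X_sub_C_eq_card]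

theorem IsSelfInversive.coeff_eq {N : ℕ} {p : K[X]} (hp : IsSelfInversive N p) {i : ℕ}
    (hi : i ≤ N) : p.coeff i = conj (p.coeff (N - i)) := by
  rw [← revAt_le hi, ← coeff_conjReflect, hp.conjReflect_eq]

theorem IsSelfInversive.odd_coeff_eq_zero_iff {m : ℕ} {p : K[X]}
    (hp : IsSelfInversive (2 * m) p) :
    (∀ i, Odd i → i ≠ m → p.coeff i = 0) ↔ ∀ i < m, Odd i → p.coeff (2 * m - i) = 0 := by
  have hodd {i : ℕ} (hle : i ≤ 2 * m) (hi : Odd i) : Odd (2 * m - i) :=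
    Nat.Even.sub_odd hle (even_two_mul m) hi
  refine ⟨fun h i hlt hi ↦ h _ (hodd (by omega) hi) (by omega), fun h i hi hne ↦ ?_⟩
  rcases hne.lt_or_gt with hlt | hgt
  · rw [hp.coeff_eq (by omega), h i hlt hi, map_zero]
  rcases le_or_gt i (2 * m) with hle | hdeg
  · simpa only [Nat.sub_sub_self hle] using h (2 * m - i) (by omega) (hodd hle hi)
  · exact coeff_eq_zero_of_degree_lt (by rw [hp.degree_eq]; exact_mod_cast hdeg)

theorem IsSelfInversive.odd_coeff_eq_zero_iff_odd_psum_roots [CharZero K] {m : ℕ} {p : K[X]}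
    (hp : IsSelfInversive (2 * m) p) (hroots : p.roots.card = 2 * m) :
    (∀ i, Odd i → i ≠ m → p.coeff i = 0) ↔
      ∀ i < m, Odd i → (p.roots.map (· ^ i)).sum = 0 := by
  rw [hp.odd_coeff_eq_zero_iff, odd_psum_eq_zero_iff_odd_esymm_eq_zero, ← hp.natDegree_eq]
  exact forall₂_congr fun i hi ↦ imp_congr_right fun _ ↦
    coeff_natDegree_sub_eq_zero_iff_esymm_roots hp.ne_zero (hroots.trans hp.natDegree_eq.symm)
      (by rw [hp.natDegree_eq]; omega)

theorem stmt_9_general [CharZero K] (hK : ∃ x : K, conj x ≠ x) (m : ℕ) (M : Multiset K)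
    (h0 : 0 ∉ M) (hcard : M.card = 2 * m) :
    (∃ D, (IsSelfInversive (2 * m) D ∧ ∀ i, Odd i → i ≠ m → D.coeff i = 0) ∧ D.roots = M) ↔
      (M.map fun z ↦ (conj z)⁻¹) = M ∧ ∀ i < m, Odd i → (M.map (· ^ i)).sum = 0 := by
  rw [← exists_isSelfInversive_roots_eq_iff hK h0, hcard, ← exists_and_right]
  refine exists_congr fun D ↦ ?_
  rw [and_right_comm]
  refine and_congr_right ?_
  rintro ⟨hD, rfl⟩
  exact hD.odd_coeff_eq_zero_iff_odd_psum_roots hcard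

end SelfInversive

theorem rakedSelfInversive_iff (k : ℕ) (D : ℂ[X]) :
    RakedSelfInversive k D ↔ IsSelfInversive (2 * (2 * k - 1)) D ∧
      ∀ i, Odd i → i ≠ 2 * k - 1 → D.coeff i = 0 := by
  rw [RakedSelfInversive, show 4 * k - 2 = 2 * (2 * k - 1) by omega]
  constructor
  · rintro ⟨hdeg, hD, hodd, heval⟩
    exact ⟨⟨(degree_eq_iff_natDegree_eq hD).mpr hdeg,
      (conjReflect_eq_self_iff_eval hdeg.le).mpr heval⟩, hodd⟩
  · rintro ⟨hD, hodd⟩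
    exact ⟨hD.natDegree_eq, hD.ne_zero, hodd,
      (conjReflect_eq_self_iff_eval hD.natDegree_eq.le).mp hD.conjReflect_eq⟩

theorem forall_odd_lt_two_mul_sub_one_iff {P : ℕ → Prop} {k : ℕ} :
    (∀ i < 2 * k - 1, Odd i → P i) ↔ ∀ j, 1 ≤ j → j ≤ k - 1 → P (2 * j - 1) := by
  refine ⟨fun h j hj hjk ↦ h _ (by omega) ⟨j - 1, by omega⟩, ?_⟩
  rintro h _ hlt ⟨j, rfl⟩
  exact h (j + 1) (by omega) (by omega)

/-- Lemma 3.3: a multiset `M` of `4k-2` nonzero complex numbers is the root multiset of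
a raked self-inversive polynomial of degree `4k-2` if and only if `conj(M) = M⁻¹`
(equivalently, `M` is invariant under `ζ ↦ 1/conj ζ` with multiplicities) and the odd
power sums `∑_{ζ∈M} ζ^{2j-1}` vanish for `j = 1, …, k-1`. -/
theorem stmt_9 (k : ℕ) (hk : 0 < k) (M : Multiset ℂ)
    (h0 : (0 : ℂ) ∉ M) (hcard : Multiset.card M = 4 * k - 2) :
    (∃ D : Polynomial ℂ, RakedSelfInversive k D ∧ D.roots = M) ↔
      (M.map (fun z => ((starRingEnd ℂ) z)⁻¹) = M ∧
       ∀ j : ℕ, 1 ≤ j → j ≤ k - 1 → (M.map (fun z => z ^ (2 * j - 1))).sum = 0) := by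
  simp_rw [rakedSelfInversive_iff, ← forall_odd_lt_two_mul_sub_one_iff (k := k)
    (P := fun i ↦ (M.map (· ^ i)).sum = 0)]
  exact stmt_9_general ⟨Complex.I, by simp [neg_eq_self]⟩ _ M h0 (by omega)
end

section
/- Let D(z) be a raked self-inversive polynomial of degree 4k−2 with real coefficients and D(0) ≠ 0, let M be the multiset of roots of D, and suppose both 1 and −1 have even (possibly zero) multiplicity in M. For a real number λ ≠ 0, let M_λ be the multiset obtained from M as follows: view M as a multiset of unordered pairs {ζ, ζ^{−1}} (note conj(M) = M and M^{−1} = M), and replace each pair {ζ, ζ^{−1}} by the pair {z, z^{−1}} of solutions of z + z^{−1} = λ(ζ + ζ^{−1}). Then M_λ is the multiset of roots of some raked self-inversive polynomial of degree 4k−2 with real coefficients. -/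
open Polynomial

/-!
If `P` is the product of `(X - a) (X - b)` over `n` pairs with `a * b = 1`, then
`P z = z ^ n * Q (z + z⁻¹)`, where `Q` is the product of the factors `X - (a + b)`. For `n` odd,
`P z - P (-z) = z ^ n * (Q w + Q (-w))` with `w = z + z⁻¹`, so `P` has no odd coefficient outside
degree `n` exactly when `Q` has no nonconstant even coefficient. Likewise `P` is real exactly when
`Q` is, and a real such `P` is self-inversive because it is palindromic. Both conditions on `Q`
survive the replacement of its roots `a + b` by `lam * (a + b)`, which multiplies each coefficient
by a power of `lam`.
-/

section Coefficients

variable {R : Type*} [CommRing R]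

theorem coeff_comp_neg_X (P : R[X]) (i : ℕ) : (P.comp (-X)).coeff i = P.coeff i * (-1) ^ i := by
  rw [← neg_one_mul, ← C_1, ← C_neg, comp_C_mul_X_coeff]

theorem scaleRoots_multiset_prod_X_sub_C [NoZeroDivisors R] (s : Multiset R) (c : R) :
    ((s.map fun a => X - C a).prod).scaleRoots c = (s.map fun a => X - C (c * a)).prod := by
  induction s using Multiset.induction_on with
  | empty => simp only [Multiset.map_zero, Multiset.prod_zero, one_scaleRoots]
  | cons a s ih =>
    simp only [Multiset.map_cons, Multiset.prod_cons, mul_scaleRoots_of_noZeroDivisors,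
      X_sub_C_scaleRoots, ih, mul_comm a c]

theorem map_scaleRoots_eq_self {σ : R →+* R} {Q : R[X]} {c : R} (hQ : Q.map σ = Q)
    (hc : σ c = c) : (Q.scaleRoots c).map σ = Q.scaleRoots c := by
  ext i
  have hcoeff : σ (Q.coeff i) = Q.coeff i := by rw [← coeff_map, hQ]
  simp only [coeff_map, coeff_scaleRoots, map_mul, map_pow, hcoeff, hc]

variable [NoZeroDivisors R] [NeZero (2 : R)]

theorem odd_coeff_eq_zero_iff_sub_comp_neg_X {P : R[X]} {n : ℕ} (hn : Odd n) :
    (∀ i, Odd i → i ≠ n → P.coeff i = 0) ↔ ∃ c, P - P.comp (-X) = C c * X ^ n := by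
  constructor
  · refine fun hP => ⟨2 * P.coeff n, ?_⟩
    ext i
    rw [coeff_sub, coeff_comp_neg_X, coeff_C_mul_X_pow]
    rcases eq_or_ne i n with rfl | hin
    · simp [hn.neg_one_pow, two_mul]
    rcases Nat.even_or_odd i with hi | hi
    · simp [hi.neg_one_pow, hin]
    · simp [hP i hi hin, hin]
  · rintro ⟨c, hc⟩ i hi hin
    have hcoeff := congrArg (coeff · i) hc
    simp only [coeff_sub, coeff_comp_neg_X, hi.neg_one_pow, coeff_C_mul_X_pow, if_neg hin]
      at hcoeff
    exact (mul_eq_zero.mp (by linear_combination hcoeff : 2 * P.coeff i = 0)).resolve_left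
      two_ne_zero

theorem even_coeff_eq_zero_iff_add_comp_neg_X {Q : R[X]} :
    (∀ i, Even i → i ≠ 0 → Q.coeff i = 0) ↔ ∃ c, Q + Q.comp (-X) = C c := by
  constructor
  · refine fun hQ => ⟨2 * Q.coeff 0, ?_⟩
    ext i
    rw [coeff_add, coeff_comp_neg_X, coeff_C]
    rcases eq_or_ne i 0 with rfl | hi0
    · simp [two_mul]
    rcases Nat.even_or_odd i with hi | hi
    · simp [hQ i hi hi0, hi0]
    · simp [hi.neg_one_pow, hi0]
  · rintro ⟨c, hc⟩ i hi hi0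
    have hcoeff := congrArg (coeff · i) hc
    simp only [coeff_add, coeff_comp_neg_X, hi.neg_one_pow, coeff_C, if_neg hi0] at hcoeff
    exact (mul_eq_zero.mp (by linear_combination hcoeff : 2 * Q.coeff i = 0)).resolve_left
      two_ne_zero

end Coefficients

section Pairs

variable {R : Type*} [CommRing R]

/-- The monic polynomial whose roots are the components of all the pairs in `s`, repeated
according to multiplicity. For inverse pairs it is the Joukowsky lift of `pairSumPoly s`. -/
noncomputable def pairRootPoly (s : Multiset (R × R)) : R[X] :=
  ((s.map Prod.fst + s.map Prod.snd).map fun a => X - C a).prod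

/-- The monic polynomial whose roots are the sums `p.1 + p.2` of the pairs `p ∈ s`; rescaling
these sums rescales its roots, which is how the deformation of inverse pairs becomes linear. -/
noncomputable def pairSumPoly (s : Multiset (R × R)) : R[X] :=
  ((s.map fun p => p.1 + p.2).map fun a => X - C a).prod

theorem pairSumPoly_eq_scaleRoots_of_rel [NoZeroDivisors R] {s t : Multiset (R × R)} {c : R}
    (hst : Multiset.Rel (fun p q => q.1 + q.2 = c * (p.1 + p.2)) s t) :
    pairSumPoly t = (pairSumPoly s).scaleRoots c := by
  have hsums : (s.map fun p => c * (p.1 + p.2)) = t.map fun q => q.1 + q.2 :=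
    Multiset.rel_eq.mp (Multiset.rel_map.mpr (hst.mono fun _ _ _ _ h => h.symm))
  rw [pairSumPoly, pairSumPoly, scaleRoots_multiset_prod_X_sub_C, ← hsums]
  simp only [Multiset.map_map, Function.comp_def]

variable [IsDomain R]

theorem natDegree_C_mul_pairRootPoly {a : R} (ha : a ≠ 0) (s : Multiset (R × R)) :
    (C a * pairRootPoly s).natDegree = 2 * s.card := by
  rw [natDegree_C_mul ha, pairRootPoly, natDegree_multiset_prod_X_sub_C_eq_card,
    Multiset.card_add, Multiset.card_map, Multiset.card_map, two_mul]

theorem roots_C_mul_pairRootPoly {a : R} (ha : a ≠ 0) (s : Multiset (R × R)) :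
    (C a * pairRootPoly s).roots = s.map Prod.fst + s.map Prod.snd := by
  rw [roots_C_mul _ ha, pairRootPoly, roots_multiset_prod_X_sub_C]

theorem eq_C_mul_pairRootPoly {P : R[X]} (hP : P.Splits) {s : Multiset (R × R)}
    (hs : s.map Prod.fst + s.map Prod.snd = P.roots) :
    P = C P.leadingCoeff * pairRootPoly s := by
  rw [pairRootPoly, hs]
  exact hP.eq_prod_roots

end Pairs

section JoukowskyLift

variable {K : Type*} [Field K]

/-- `P` is the polynomial `X ^ n * Q (X + X⁻¹)`, the lift of `Q` along the Joukowsky map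
`z ↦ z + z⁻¹` with denominators cleared. The identity is imposed on values at `z ≠ 0`, which
determines `P` when `K` is infinite. -/
def IsJoukowskyLift (n : ℕ) (Q P : K[X]) : Prop :=
  ∀ z : K, z ≠ 0 → P.eval z = z ^ n * Q.eval (z + z⁻¹)

theorem exists_add_inv_eq [IsAlgClosed K] (w : K) : ∃ z : K, z ≠ 0 ∧ z + z⁻¹ = w := by
  have hdeg : (X ^ 2 - C w * X + 1 : K[X]).degree = 2 := by compute_degree!
  obtain ⟨z, hz⟩ := IsAlgClosed.exists_root (X ^ 2 - C w * X + 1 : K[X]) (by simp [hdeg])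
  have hquad : z ^ 2 - w * z + 1 = 0 := by simpa using hz
  have hz0 : z ≠ 0 := by
    rintro rfl
    simp at hquad
  refine ⟨z, hz0, ?_⟩
  field_simp
  linear_combination hquad

namespace IsJoukowskyLift

variable {n m : ℕ} {P P₁ P₂ Q Q₁ Q₂ : K[X]}

theorem mul (h₁ : IsJoukowskyLift n Q₁ P₁) (h₂ : IsJoukowskyLift m Q₂ P₂) :
    IsJoukowskyLift (n + m) (Q₁ * Q₂) (P₁ * P₂) := fun z hz => by
  rw [eval_mul, eval_mul, h₁ z hz, h₂ z hz]
  ring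

theorem C_mul (h : IsJoukowskyLift n Q P) (c : K) : IsJoukowskyLift n (C c * Q) (C c * P) :=
  fun z hz => by
    rw [eval_mul, eval_mul, h z hz, eval_C, eval_C]
    ring

theorem C_mul_X_pow (n : ℕ) (c : K) : IsJoukowskyLift n (C c) (C c * X ^ n) := fun z _ => by
  simp only [eval_mul, eval_C, eval_pow, eval_X, mul_comm]

theorem X_sub_C_mul_X_sub_C {a b : K} (hab : a * b = 1) :
    IsJoukowskyLift 1 (X - C (a + b)) ((X - C a) * (X - C b)) := fun z hz => by
  simp only [eval_mul, eval_sub, eval_X, eval_C]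
  field_simp
  linear_combination hab

theorem sub_comp_neg_X (hn : Odd n) (h : IsJoukowskyLift n Q P) :
    IsJoukowskyLift n (Q + Q.comp (-X)) (P - P.comp (-X)) := fun z hz => by
  simp only [eval_sub, eval_add, eval_comp, eval_neg, eval_X]
  rw [h z hz, h (-z) (neg_ne_zero.mpr hz), hn.neg_pow, inv_neg, neg_add]
  ring

theorem map {L : Type*} [Field L] {σ : K →+* L} (hσ : Function.Surjective σ)
    (h : IsJoukowskyLift n Q P) : IsJoukowskyLift n (Q.map σ) (P.map σ) := fun z hz => by
  obtain ⟨y, rfl⟩ := hσ z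
  rw [← map_inv₀, ← map_add, eval_map_apply, eval_map_apply, h y ((map_ne_zero σ).mp hz),
    map_mul, map_pow]

theorem eval_eq_pow_mul_eval_inv (h : IsJoukowskyLift n Q P) {z : K} (hz : z ≠ 0) :
    P.eval z = z ^ (2 * n) * P.eval z⁻¹ := by
  rw [h z hz, h z⁻¹ (inv_ne_zero hz), inv_inv, add_comm z⁻¹, two_mul, pow_add, mul_assoc,
    ← mul_assoc (z ^ n) (z⁻¹ ^ n), ← mul_pow, mul_inv_cancel₀ hz, one_pow, one_mul]

theorem lift_unique [Infinite K] (h₁ : IsJoukowskyLift n Q P₁) (h₂ : IsJoukowskyLift n Q P₂) :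
    P₁ = P₂ :=
  eq_of_infinite_eval_eq P₁ P₂ <| (Set.finite_singleton (0 : K)).infinite_compl.mono
    fun z hz => (h₁ z hz).trans (h₂ z hz).symm

variable [IsAlgClosed K]

theorem base_unique (h₁ : IsJoukowskyLift n Q₁ P) (h₂ : IsJoukowskyLift n Q₂ P) : Q₁ = Q₂ :=
  funext fun w => by
    obtain ⟨z, hz, rfl⟩ := exists_add_inv_eq w
    exact mul_left_cancel₀ (pow_ne_zero n hz) ((h₁ z hz).symm.trans (h₂ z hz))

theorem lift_eq_iff (h₁ : IsJoukowskyLift n Q₁ P₁) (h₂ : IsJoukowskyLift n Q₂ P₂) :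
    P₁ = P₂ ↔ Q₁ = Q₂ :=
  ⟨fun hP => h₁.base_unique (hP ▸ h₂), fun hQ => h₁.lift_unique (hQ ▸ h₂)⟩

theorem map_eq_self_iff {σ : K →+* K} (hσ : Function.Surjective σ) (h : IsJoukowskyLift n Q P) :
    P.map σ = P ↔ Q.map σ = Q :=
  (h.map hσ).lift_eq_iff h

theorem odd_coeff_eq_zero_iff [NeZero (2 : K)] (hn : Odd n) (h : IsJoukowskyLift n Q P) :
    (∀ i, Odd i → i ≠ n → P.coeff i = 0) ↔ ∀ i, Even i → i ≠ 0 → Q.coeff i = 0 := by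
  rw [odd_coeff_eq_zero_iff_sub_comp_neg_X hn, even_coeff_eq_zero_iff_add_comp_neg_X]
  exact exists_congr fun c => (h.sub_comp_neg_X hn).lift_eq_iff (C_mul_X_pow n c)

end IsJoukowskyLift

theorem isJoukowskyLift_pairRootPoly {s : Multiset (K × K)} (hs : ∀ p ∈ s, p.1 * p.2 = 1) :
    IsJoukowskyLift s.card (pairSumPoly s) (pairRootPoly s) := by
  induction s using Multiset.induction_on with
  | empty => simpa [pairSumPoly, pairRootPoly] using IsJoukowskyLift.C_mul_X_pow 0 (1 : K)
  | cons p s ih =>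
    obtain ⟨hp, hs⟩ := Multiset.forall_mem_cons.mp hs
    convert (ih hs).mul (.X_sub_C_mul_X_sub_C hp) using 1
    · rw [Multiset.card_cons]
    · simp only [pairSumPoly, Multiset.map_cons, Multiset.prod_cons, mul_comm]
    · simp only [pairRootPoly, Multiset.map_add, Multiset.prod_add, Multiset.map_cons,
        Multiset.prod_cons]
      ring

theorem isJoukowskyLift_scaleRoots_of_rel {s t : Multiset (K × K)} {c : K}
    (hst : Multiset.Rel (fun p q => q.1 * q.2 = 1 ∧ q.1 + q.2 = c * (p.1 + p.2)) s t) (a : K) :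
    IsJoukowskyLift s.card ((C a * pairSumPoly s).scaleRoots c) (C a * pairRootPoly t) := by
  have ht : ∀ q ∈ t, q.1 * q.2 = 1 := fun q hq => by
    obtain ⟨_, _, hq1, _⟩ := Multiset.exists_mem_of_rel_of_mem (Multiset.rel_flip.mpr hst) hq
    exact hq1
  rw [mul_scaleRoots_of_noZeroDivisors, scaleRoots_C,
    ← pairSumPoly_eq_scaleRoots_of_rel (hst.mono fun _ _ _ _ h => h.2),
    Multiset.card_eq_card_of_rel hst]
  exact (isJoukowskyLift_pairRootPoly ht).C_mul a

end JoukowskyLift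

section Raked

theorem map_conj_eq_self_iff {P : ℂ[X]} :
    P.map (starRingEnd ℂ) = P ↔ ∀ i, (P.coeff i).im = 0 := by
  simp only [Polynomial.ext_iff, coeff_map, Complex.conj_eq_iff_im]

theorem IsJoukowskyLift.eval_eq_pow_mul_conj {n : ℕ} {Q P : ℂ[X]} (h : IsJoukowskyLift n Q P)
    (hreal : P.map (starRingEnd ℂ) = P) {z : ℂ} (hz : z ≠ 0) :
    P.eval z = z ^ (2 * n) * starRingEnd ℂ (P.eval (starRingEnd ℂ z)⁻¹) := by
  rw [← eval_map_apply, hreal, map_inv₀, Complex.conj_conj, h.eval_eq_pow_mul_eval_inv hz]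

theorem rakedSelfInversive_of_scaleRoots {k : ℕ} (hk : 0 < k) {Q D D' : ℂ[X]} {c : ℝ}
    (hodd : ∀ i, Odd i → i ≠ 2 * k - 1 → D.coeff i = 0) (hreal : D.map (starRingEnd ℂ) = D)
    (hlift : IsJoukowskyLift (2 * k - 1) Q D)
    (hlift' : IsJoukowskyLift (2 * k - 1) (Q.scaleRoots c) D')
    (hdeg : D'.natDegree = 4 * k - 2) :
    RakedSelfInversive k D' ∧ D'.map (starRingEnd ℂ) = D' := by
  have hn : Odd (2 * k - 1) := ⟨k - 1, by omega⟩
  have hne : D' ≠ 0 := ne_zero_of_natDegree_gt (n := 0) (by omega)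
  have hconj : Function.Surjective (starRingEnd ℂ) := (starRingAut (R := ℂ)).surjective
  have hreal' : D'.map (starRingEnd ℂ) = D' :=
    (hlift'.map_eq_self_iff hconj).mpr
      (map_scaleRoots_eq_self ((hlift.map_eq_self_iff hconj).mp hreal) (Complex.conj_ofReal c))
  have hodd' : ∀ i, Odd i → i ≠ 2 * k - 1 → D'.coeff i = 0 :=
    (hlift'.odd_coeff_eq_zero_iff hn).mpr fun i hi hi0 => by
      rw [coeff_scaleRoots, (hlift.odd_coeff_eq_zero_iff hn).mp hodd i hi hi0, zero_mul]
  refine ⟨⟨hdeg, hne, hodd', fun z hz => ?_⟩, hreal'⟩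
  rw [hlift'.eval_eq_pow_mul_conj hreal' hz, show 2 * (2 * k - 1) = 4 * k - 2 by omega]

end Raked

/-- Lemma 5.1: the deformation of the root multiset of a raked self-inversive polynomial.
Let `D` be a raked self-inversive polynomial of degree `4k-2` with real coefficients,
`D(0) ≠ 0`, whose roots `1` and `-1` (if any) have even multiplicity.  Split the root
multiset `M` of `D` into unordered pairs `{ζ, ζ⁻¹}` (recorded by the multiset `pairs`),
and replace each pair `{ζ, ζ⁻¹}` by the pair `{z, z⁻¹}` of solutions of
`z + z⁻¹ = λ(ζ + ζ⁻¹)` (recorded by `pairs'`).  Then the resulting multiset `M_λ` is the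
root multiset of some raked self-inversive polynomial of degree `4k-2` with real
coefficients. -/
theorem stmt_12 (k : ℕ) (hk : 0 < k) (D : Polynomial ℂ)
    (hD : RakedSelfInversive k D)
    (hreal : ∀ i : ℕ, (D.coeff i).im = 0)
    (h0 : D.eval 0 ≠ 0)
    (h1 : Even (D.roots.count 1)) (hm1 : Even (D.roots.count (-1)))
    (lam : ℝ) (hlam : lam ≠ 0)
    (pairs pairs' : Multiset (ℂ × ℂ))
    (hpairs : pairs.map Prod.fst + pairs.map Prod.snd = D.roots)
    (hinv : ∀ p ∈ pairs, p.1 * p.2 = 1)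
    (hdef : Multiset.Rel
      (fun p q => q.1 * q.2 = 1 ∧ q.1 + q.2 = (lam : ℂ) * (p.1 + p.2)) pairs pairs')
    (Mlam : Multiset ℂ)
    (hMlam : Mlam = pairs'.map Prod.fst + pairs'.map Prod.snd) :
    ∃ Dlam : Polynomial ℂ, RakedSelfInversive k Dlam ∧
      (∀ i : ℕ, (Dlam.coeff i).im = 0) ∧ Dlam.roots = Mlam := by
  obtain ⟨hnat, hne, hodd, -⟩ := hD
  have hlead : D.leadingCoeff ≠ 0 := leadingCoeff_ne_zero.mpr hne
  have hfactor : D = C D.leadingCoeff * pairRootPoly pairs :=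
    eq_C_mul_pairRootPoly (IsAlgClosed.splits D) hpairs
  have hdeg : 2 * pairs.card = 4 * k - 2 := by
    rw [← natDegree_C_mul_pairRootPoly hlead, ← hfactor, hnat]
  have hdeg' : (C D.leadingCoeff * pairRootPoly pairs').natDegree = 4 * k - 2 := by
    rw [natDegree_C_mul_pairRootPoly hlead, ← Multiset.card_eq_card_of_rel hdef, hdeg]
  have hlift := (isJoukowskyLift_pairRootPoly hinv).C_mul D.leadingCoeff
  have hlift' := isJoukowskyLift_scaleRoots_of_rel hdef D.leadingCoeff
  rw [← hfactor] at hlift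
  rw [show pairs.card = 2 * k - 1 by omega] at hlift hlift'
  obtain ⟨hraked, hreal'⟩ :=
    rakedSelfInversive_of_scaleRoots hk hodd (map_conj_eq_self_iff.mpr hreal) hlift hlift' hdeg'
  exact ⟨_, hraked, map_conj_eq_self_iff.mp hreal',
    (roots_C_mul_pairRootPoly hlead pairs').trans hMlam.symm⟩
end
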